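/- arXiv:1902.06074 — 9 statements merged into one kernel-verified Lean document; each statement's English description precedes it below -/
import Mathlib

section
/- Let (⊙, ⟨-,-⟩, ⦅-,-⦆) be a two-variable adjunction (THC situation) on categories 𝔸, 𝕊, 𝔹, where 𝔹 has pushouts and 𝔸 has pullbacks. For any morphisms f : A → B in 𝔸, u : L → K in 𝕊, and g : X → Y in 𝔹, there is a bijection between the set of morphisms f ⋄ u → g in the arrow category 𝔹^[1] and the set of morphisms f → ⟪u,g⟫ in the arrow category 𝔸^[1]. -/
/-!
A map out of the pushout is a compatible pair of maps, so a square `f ⋄ u ⟶ g` is a triple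
`B ⊙ L ⟶ X`, `A ⊙ K ⟶ X`, `B ⊙ K ⟶ Y` satisfying three equations (`THC.tensorArrowEquiv`).
Dually, a square `f ⟶ ⟪u,g⟫` is a triple `B ⟶ ⟨L,X⟩`, `A ⟶ ⟨K,X⟩`, `B ⟶ ⟨K,Y⟩` satisfying
three equations (`THC.homArrowEquiv`). The adjunction bijection `𝔹(a ⊙ s, b) ≃ 𝔸(a, ⟨s,b⟩)`
transposes the components, and its naturality matches the equations one by one
(`THC.tripleEquiv`). The pushout's gluing equation becomes the first-projection part of the
square in `𝔸`, while the pullback's gluing equation comes from the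
`B ⊙ L` part of the square in `𝔹`.
-/

open CategoryTheory Category Limits Opposite

universe v₁ v₂ v₃ u₁ u₂ u₃

/-- A two-variable adjunction (`THC` situation) on categories `𝔸`, `𝕊`, `𝔹`:
functors `⊙ : 𝔸 × 𝕊 ⥤ 𝔹`, `⟨-,-⟩ : 𝕊ᵒᵖ × 𝔹 ⥤ 𝔸`, `⦅-,-⦆ : 𝔸ᵒᵖ × 𝔹 ⥤ 𝕊` (in curried form),
together with bijections `𝔹(a ⊙ s, b) ≅ 𝔸(a, ⟨s,b⟩) ≅ 𝕊(s, ⦅a,b⦆)` natural in `a`, `s`, `b`. -/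
structure THC (𝔸 : Type u₁) (𝕊 : Type u₂) (𝔹 : Type u₃)
    [Category.{v₁} 𝔸] [Category.{v₂} 𝕊] [Category.{v₃} 𝔹] where
  tensor : 𝔸 ⥤ 𝕊 ⥤ 𝔹
  hom : 𝕊ᵒᵖ ⥤ 𝔹 ⥤ 𝔸
  cotensor : 𝔸ᵒᵖ ⥤ 𝔹 ⥤ 𝕊
  homEquiv : ∀ (a : 𝔸) (s : 𝕊) (b : 𝔹),
    ((tensor.obj a).obj s ⟶ b) ≃ (a ⟶ (hom.obj (op s)).obj b)
  cotensorEquiv : ∀ (a : 𝔸) (s : 𝕊) (b : 𝔹),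
    ((tensor.obj a).obj s ⟶ b) ≃ (s ⟶ (cotensor.obj (op a)).obj b)
  homEquiv_naturality_left : ∀ {a a' : 𝔸} (h : a' ⟶ a) (s : 𝕊) (b : 𝔹)
    (φ : (tensor.obj a).obj s ⟶ b),
    homEquiv a' s b ((tensor.map h).app s ≫ φ) = h ≫ homEquiv a s b φ
  homEquiv_naturality_mid : ∀ (a : 𝔸) {s s' : 𝕊} (w : s ⟶ s') (b : 𝔹)
    (φ : (tensor.obj a).obj s' ⟶ b),
    homEquiv a s b ((tensor.obj a).map w ≫ φ) = homEquiv a s' b φ ≫ (hom.map w.op).app b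
  homEquiv_naturality_right : ∀ (a : 𝔸) (s : 𝕊) {b b' : 𝔹} (k : b ⟶ b')
    (φ : (tensor.obj a).obj s ⟶ b),
    homEquiv a s b' (φ ≫ k) = homEquiv a s b φ ≫ (hom.obj (op s)).map k
  cotensorEquiv_naturality_left : ∀ {a a' : 𝔸} (h : a' ⟶ a) (s : 𝕊) (b : 𝔹)
    (φ : (tensor.obj a).obj s ⟶ b),
    cotensorEquiv a' s b ((tensor.map h).app s ≫ φ) =
      cotensorEquiv a s b φ ≫ (cotensor.map h.op).app b
  cotensorEquiv_naturality_mid : ∀ (a : 𝔸) {s s' : 𝕊} (w : s ⟶ s') (b : 𝔹)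
    (φ : (tensor.obj a).obj s' ⟶ b),
    cotensorEquiv a s b ((tensor.obj a).map w ≫ φ) = w ≫ cotensorEquiv a s' b φ
  cotensorEquiv_naturality_right : ∀ (a : 𝔸) (s : 𝕊) {b b' : 𝔹} (k : b ⟶ b')
    (φ : (tensor.obj a).obj s ⟶ b),
    cotensorEquiv a s b' (φ ≫ k) = cotensorEquiv a s b φ ≫ (cotensor.obj (op a)).map k

namespace THC

variable {𝔸 : Type u₁} {𝕊 : Type u₂} {𝔹 : Type u₃}
  [Category.{v₁} 𝔸] [Category.{v₂} 𝕊] [Category.{v₃} 𝔹]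

/-- The Leibniz tensor (pushout-product) `f ⋄ u : (B ⊙ L) ⊔_{A⊙L} (A ⊙ K) ⟶ B ⊙ K`. -/
noncomputable def leibnizTensor (T : THC 𝔸 𝕊 𝔹) [HasPushouts 𝔹]
    {A B : 𝔸} (f : A ⟶ B) {L K : 𝕊} (u : L ⟶ K) :
    pushout ((T.tensor.map f).app L) ((T.tensor.obj A).map u) ⟶ (T.tensor.obj B).obj K :=
  pushout.desc ((T.tensor.obj B).map u) ((T.tensor.map f).app K)
    ((T.tensor.map f).naturality u).symm

/-- The Leibniz hom `⟪u,g⟫ : ⟨K,X⟩ ⟶ ⟨L,X⟩ ×_{⟨L,Y⟩} ⟨K,Y⟩`. -/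
noncomputable def leibnizHom (T : THC 𝔸 𝕊 𝔹) [HasPullbacks 𝔸]
    {L K : 𝕊} (u : L ⟶ K) {X Y : 𝔹} (g : X ⟶ Y) :
    (T.hom.obj (op K)).obj X ⟶
      pullback ((T.hom.obj (op L)).map g) ((T.hom.map u.op).app Y) :=
  pullback.lift ((T.hom.map u.op).app X) ((T.hom.obj (op K)).map g)
    ((T.hom.map u.op).naturality g).symm

/-- The Leibniz cotensor `⦅f,g⦆ : ⦅B,X⦆ ⟶ ⦅A,X⦆ ×_{⦅A,Y⦆} ⦅B,Y⦆`. -/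
noncomputable def leibnizCotensor (T : THC 𝔸 𝕊 𝔹) [HasPullbacks 𝕊]
    {A B : 𝔸} (f : A ⟶ B) {X Y : 𝔹} (g : X ⟶ Y) :
    (T.cotensor.obj (op B)).obj X ⟶
      pullback ((T.cotensor.obj (op A)).map g) ((T.cotensor.map f.op).app Y) :=
  pullback.lift ((T.cotensor.map f.op).app X) ((T.cotensor.obj (op B)).map g)
    ((T.cotensor.map f.op).naturality g).symm

end THC

namespace THC

variable {𝔸 : Type u₁} {𝕊 : Type u₂} {𝔹 : Type u₃}
  [Category.{v₁} 𝔸] [Category.{v₂} 𝕊] [Category.{v₃} 𝔹]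

/-- A morphism `f ⋄ u ⟶ g` unpacked by the universal property of the pushout: maps
`B ⊙ L ⟶ X`, `A ⊙ K ⟶ X`, `B ⊙ K ⟶ Y` agreeing on `A ⊙ L` (into `X`), and on `B ⊙ L` and
`A ⊙ K` (into `Y`). -/
abbrev TensorTriple (T : THC 𝔸 𝕊 𝔹) {A B : 𝔸} (f : A ⟶ B) {L K : 𝕊} (u : L ⟶ K)
    {X Y : 𝔹} (g : X ⟶ Y) :=
  { t : ((T.tensor.obj B).obj L ⟶ X) × ((T.tensor.obj A).obj K ⟶ X) ×
      ((T.tensor.obj B).obj K ⟶ Y) //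
    (T.tensor.map f).app L ≫ t.1 = (T.tensor.obj A).map u ≫ t.2.1 ∧
    t.1 ≫ g = (T.tensor.obj B).map u ≫ t.2.2 ∧
    t.2.1 ≫ g = (T.tensor.map f).app K ≫ t.2.2 }

/-- A morphism `f ⟶ ⟪u,g⟫` unpacked by the universal property of the pullback: maps
`B ⟶ ⟨L,X⟩`, `A ⟶ ⟨K,X⟩`, `B ⟶ ⟨K,Y⟩` subject to the transposes of the three equations
in `TensorTriple`. -/
abbrev HomTriple (T : THC 𝔸 𝕊 𝔹) {A B : 𝔸} (f : A ⟶ B) {L K : 𝕊} (u : L ⟶ K)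
    {X Y : 𝔹} (g : X ⟶ Y) :=
  { t : (B ⟶ (T.hom.obj (op L)).obj X) × (A ⟶ (T.hom.obj (op K)).obj X) ×
      (B ⟶ (T.hom.obj (op K)).obj Y) //
    f ≫ t.1 = t.2.1 ≫ (T.hom.map u.op).app X ∧
    t.1 ≫ (T.hom.obj (op L)).map g = t.2.2 ≫ (T.hom.map u.op).app Y ∧
    t.2.1 ≫ (T.hom.obj (op K)).map g = f ≫ t.2.2 }

variable (T : THC 𝔸 𝕊 𝔹) {A B : 𝔸} (f : A ⟶ B) {L K : 𝕊} (u : L ⟶ K) {X Y : 𝔹} (g : X ⟶ Y)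

/-- Transposing all three components; each equation corresponds to its transpose because
`homEquiv` is natural and injective. -/
def tripleEquiv : T.TensorTriple f u g ≃ T.HomTriple f u g :=
  ((T.homEquiv B L X).prodCongr
    ((T.homEquiv A K X).prodCongr (T.homEquiv B K Y))).subtypeEquiv (by
      rintro ⟨p, q, r⟩
      simp only [Equiv.prodCongr_apply, Prod.map_apply, ← T.homEquiv_naturality_left,
        ← T.homEquiv_naturality_mid, ← T.homEquiv_naturality_right,
        EmbeddingLike.apply_eq_iff_eq])

/-- Squares `f ⋄ u ⟶ g` are triples, by the universal property of the pushout. -/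
noncomputable def tensorArrowEquiv [HasPushouts 𝔹] :
    (Arrow.mk (T.leibnizTensor f u) ⟶ Arrow.mk g) ≃ T.TensorTriple f u g where
  toFun φ := ⟨(pushout.inl _ _ ≫ φ.left, pushout.inr _ _ ≫ φ.left, φ.right), by
    have w : φ.left ≫ g = T.leibnizTensor f u ≫ φ.right := φ.w
    refine ⟨pushout.condition_assoc _, ?_, ?_⟩
    · simp only [assoc]
      rw [w]
      exact pushout.inl_desc_assoc _ _ _ _
    · simp only [assoc]
      rw [w]
      exact pushout.inr_desc_assoc _ _ _ _⟩
  invFun t := Arrow.homMk (pushout.desc t.1.1 t.1.2.1 t.2.1) t.1.2.2 (by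
    apply pushout.hom_ext
    · exact (pushout.inl_desc_assoc _ _ _ _).trans
        (t.2.2.1.trans (pushout.inl_desc_assoc _ _ _ _).symm)
    · exact (pushout.inr_desc_assoc _ _ _ _).trans
        (t.2.2.2.trans (pushout.inr_desc_assoc _ _ _ _).symm))
  left_inv φ := by
    ext
    · apply pushout.hom_ext
      · exact pushout.inl_desc _ _ _
      · exact pushout.inr_desc _ _ _
    · rfl
  right_inv t :=
    Subtype.ext (Prod.ext (pushout.inl_desc _ _ _) (Prod.ext (pushout.inr_desc _ _ _) rfl))

/-- Squares `f ⟶ ⟪u,g⟫` are triples, by the universal property of the pullback. -/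
noncomputable def homArrowEquiv [HasPullbacks 𝔸] :
    (Arrow.mk f ⟶ Arrow.mk (T.leibnizHom u g)) ≃ T.HomTriple f u g where
  toFun ψ := ⟨(ψ.right ≫ pullback.fst _ _, ψ.left, ψ.right ≫ pullback.snd _ _), by
    have w : ψ.left ≫ T.leibnizHom u g = f ≫ ψ.right := ψ.w
    refine ⟨?_, ?_, ?_⟩
    · dsimp only
      rw [← assoc, ← w, assoc]
      exact congrArg (ψ.left ≫ ·) (pullback.lift_fst _ _ _)
    · simp only [assoc]
      rw [pullback.condition]
    · dsimp only
      rw [← assoc f, ← w, assoc]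
      exact congrArg (ψ.left ≫ ·) (pullback.lift_snd _ _ _).symm⟩
  invFun t := Arrow.homMk t.1.2.1 (pullback.lift t.1.1 t.1.2.2 t.2.2.1) (by
    apply pullback.hom_ext
    · rw [assoc, assoc]
      exact (congrArg (t.1.2.1 ≫ ·) (pullback.lift_fst _ _ _)).trans
        (t.2.1.symm.trans (congrArg (f ≫ ·) (pullback.lift_fst _ _ _).symm))
    · rw [assoc, assoc]
      exact (congrArg (t.1.2.1 ≫ ·) (pullback.lift_snd _ _ _)).trans
        (t.2.2.2.trans (congrArg (f ≫ ·) (pullback.lift_snd _ _ _).symm)))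
  left_inv ψ := by
    ext
    · rfl
    · apply pullback.hom_ext
      · exact pullback.lift_fst _ _ _
      · exact pullback.lift_snd _ _ _
  right_inv t :=
    Subtype.ext (Prod.ext (pullback.lift_fst _ _ _) (Prod.ext rfl (pullback.lift_snd _ _ _)))

end THC

/-- For a THC situation on `𝔸`, `𝕊`, `𝔹` (with pushouts in `𝔹` and
pullbacks in `𝔸`) and morphisms `f : A ⟶ B`, `u : L ⟶ K`, `g : X ⟶ Y`, there is a bijection
between morphisms `f ⋄ u ⟶ g` in `𝔹^[1]` and morphisms `f ⟶ ⟪u,g⟫` in `𝔸^[1]`. -/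
theorem thc_lift_hom {𝔸 : Type u₁} {𝕊 : Type u₂} {𝔹 : Type u₃}
    [Category.{v₁} 𝔸] [Category.{v₂} 𝕊] [Category.{v₃} 𝔹]
    (T : THC 𝔸 𝕊 𝔹) [HasPushouts 𝔹] [HasPullbacks 𝔸]
    {A B : 𝔸} (f : A ⟶ B) {L K : 𝕊} (u : L ⟶ K) {X Y : 𝔹} (g : X ⟶ Y) :
    Nonempty ((Arrow.mk (T.leibnizTensor f u) ⟶ Arrow.mk g) ≃
      (Arrow.mk f ⟶ Arrow.mk (T.leibnizHom u g))) := by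
  exact ⟨(T.tensorArrowEquiv f u g).trans
    ((T.tripleEquiv f u g).trans (T.homArrowEquiv f u g).symm)⟩
end

section
/- Let (⊙, ⟨-,-⟩, ⦅-,-⦆) be a two-variable adjunction (THC situation) on categories 𝔸, 𝕊, 𝔹, where 𝔹 has pushouts and 𝔸 and 𝕊 have pullbacks. Then the Leibniz operations ⋄ : 𝔸^[1] × 𝕊^[1] ⥤ 𝔹^[1], ⟪-,-⟫ : (𝕊^[1])ᵒᵖ × 𝔹^[1] ⥤ 𝔸^[1], ⦅-,-⦆̂ : (𝔸^[1])ᵒᵖ × 𝔹^[1] ⥤ 𝕊^[1] form a two-variable adjunction on the arrow categories 𝔸^[1], 𝕊^[1], 𝔹^[1]: there are bijections 𝔹^[1](f ⋄ u, g) ≅ 𝔸^[1](f, ⟪u,g⟫) ≅ 𝕊^[1](u, ⦅f,g⦆̂) natural in f, u, g with respect to morphisms of the arrow categories. -/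
/-!
For `f : A ⟶ B`, `u : L ⟶ K`, `g : X ⟶ Y`, the universal property of the pushout shows that a
square `f ⋄ u ⟶ g` amounts to three maps `p : B ⊙ L ⟶ X`, `q : A ⊙ K ⟶ X`, `r : B ⊙ K ⟶ Y`
subject to three equations. Dually, a square `f ⟶ ⟪u,g⟫` amounts to maps `A ⟶ ⟨K,X⟩`,
`B ⟶ ⟨L,X⟩`, `B ⟶ ⟨K,Y⟩` subject to three equations. Transposing each component along the given
adjunction matches `q`, `p`, `r` with these, and by naturality it also matches the equations;
the same holds for squares from `u` to the Leibniz cotensor. These bijections are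
`THC.arrowHomEquiv` and `THC.arrowCotensorEquiv`; their naturality is checked jointly in all
three variables, again on components, in `THC.arrowHomEquiv_nat` and
`THC.arrowCotensorEquiv_nat`.

The Leibniz hom and cotensor are both instances of one construction `LeibnizArrow.lhom` for a
bifunctor `G : Cᵒᵖ ⥤ D ⥤ E`.
-/

open CategoryTheory Category Limits Opposite

universe v₁ v₂ v₃ u₁ u₂ u₃

/-! ### Leibniz constructions for a bifunctor -/

namespace LeibnizArrow

variable {C : Type u₁} {D : Type u₂} {E : Type u₃}
  [Category.{v₁} C] [Category.{v₂} D] [Category.{v₃} E]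

/-- A bifunctor in curried form, from a jointly functorial action on pairs of morphisms. -/
def mkBifunctor (o : C → D → E)
    (m : ∀ {c c' : C} {d d' : D}, (c ⟶ c') → (d ⟶ d') → (o c d ⟶ o c' d'))
    (m_id : ∀ c d, m (𝟙 c) (𝟙 d) = 𝟙 (o c d))
    (m_comp : ∀ {c c' c'' : C} {d d' d'' : D} (α : c ⟶ c') (α' : c' ⟶ c'')
      (β : d ⟶ d') (β' : d' ⟶ d''), m (α ≫ α') (β ≫ β') = m α β ≫ m α' β') :
    C ⥤ D ⥤ E where
  obj c :=
    { obj := fun d => o c d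
      map := fun β => m (𝟙 c) β
      map_id := fun d => m_id c d
      map_comp := fun β β' => by rw [← m_comp, comp_id] }
  map α :=
    { app := fun d => m α (𝟙 d)
      naturality := fun d d' β => by
        change m _ _ ≫ m _ _ = m _ _ ≫ m _ _
        rw [← m_comp, ← m_comp, comp_id, comp_id, id_comp, id_comp] }
  map_id c := by
    ext d
    exact m_id c d
  map_comp α α' := by
    ext d
    change m _ _ = m _ _ ≫ m _ _
    rw [← m_comp, comp_id]

section Tensor

variable (F : C ⥤ D ⥤ E) [HasPushouts E]

/-- The domain of the Leibniz tensor of two arrows. -/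
noncomputable abbrev dom (f : Arrow C) (u : Arrow D) : E :=
  pushout ((F.map f.hom).app u.left) ((F.obj f.left).map u.hom)

/-- The coprojection of `B ⊙ L` into the domain of `f ⋄ u`. -/
noncomputable abbrev inl (f : Arrow C) (u : Arrow D) :
    (F.obj f.right).obj u.left ⟶ dom F f u := pushout.inl _ _

/-- The coprojection of `A ⊙ K` into the domain of `f ⋄ u`. -/
noncomputable abbrev inr (f : Arrow C) (u : Arrow D) :
    (F.obj f.left).obj u.right ⟶ dom F f u := pushout.inr _ _

/-- The Leibniz tensor of two arrows, as a morphism. -/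
noncomputable def ten (f : Arrow C) (u : Arrow D) :
    dom F f u ⟶ (F.obj f.right).obj u.right :=
  pushout.desc ((F.obj f.right).map u.hom) ((F.map f.hom).app u.right)
    ((F.map f.hom).naturality u.hom).symm

lemma inl_ten (f : Arrow C) (u : Arrow D) :
    inl F f u ≫ ten F f u = (F.obj f.right).map u.hom := pushout.inl_desc _ _ _

lemma inl_ten_assoc (f : Arrow C) (u : Arrow D) {W : E}
    (k : (F.obj f.right).obj u.right ⟶ W) :
    inl F f u ≫ ten F f u ≫ k =
      (F.obj f.right).map u.hom ≫ k := by
  simp only [← assoc, inl_ten]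

lemma inr_ten (f : Arrow C) (u : Arrow D) :
    inr F f u ≫ ten F f u = (F.map f.hom).app u.right := pushout.inr_desc _ _ _

lemma inr_ten_assoc (f : Arrow C) (u : Arrow D) {W : E}
    (k : (F.obj f.right).obj u.right ⟶ W) :
    inr F f u ≫ ten F f u ≫ k =
      (F.map f.hom).app u.right ≫ k := by
  simp only [← assoc, inr_ten]

lemma condition (f : Arrow C) (u : Arrow D) :
    (F.map f.hom).app u.left ≫ inl F f u = (F.obj f.left).map u.hom ≫ inr F f u :=
  pushout.condition

lemma condition_assoc (f : Arrow C) (u : Arrow D) {W : E}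
    (k : dom F f u ⟶ W) :
    (F.map f.hom).app u.left ≫ inl F f u ≫ k =
      (F.obj f.left).map u.hom ≫ inr F f u ≫ k := by
  simp only [← assoc, condition]

lemma dom_ext {f : Arrow C} {u : Arrow D} {Z : E} {p q : dom F f u ⟶ Z}
    (h₁ : inl F f u ≫ p = inl F f u ≫ q) (h₂ : inr F f u ≫ p = inr F f u ≫ q) : p = q :=
  pushout.hom_ext h₁ h₂

variable {F} in
/-- A map out of the pushout `dom F f u`. -/
noncomputable def domDesc {f : Arrow C} {u : Arrow D} {Z : E}
    (p : (F.obj f.right).obj u.left ⟶ Z) (q : (F.obj f.left).obj u.right ⟶ Z)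
    (h : (F.map f.hom).app u.left ≫ p = (F.obj f.left).map u.hom ≫ q) : dom F f u ⟶ Z :=
  pushout.desc p q h

lemma inl_domDesc {f : Arrow C} {u : Arrow D} {Z : E}
    (p : (F.obj f.right).obj u.left ⟶ Z) (q : (F.obj f.left).obj u.right ⟶ Z)
    (h : (F.map f.hom).app u.left ≫ p = (F.obj f.left).map u.hom ≫ q) :
    inl F f u ≫ domDesc p q h = p := pushout.inl_desc _ _ _

lemma inl_domDesc_assoc {f : Arrow C} {u : Arrow D} {Z : E}
    (p : (F.obj f.right).obj u.left ⟶ Z) (q : (F.obj f.left).obj u.right ⟶ Z)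
    (h : (F.map f.hom).app u.left ≫ p = (F.obj f.left).map u.hom ≫ q) {W : E}
    (k : Z ⟶ W) :
    inl F f u ≫ domDesc p q h ≫ k =
      p ≫ k := by
  simp only [← assoc, inl_domDesc]

lemma inr_domDesc {f : Arrow C} {u : Arrow D} {Z : E}
    (p : (F.obj f.right).obj u.left ⟶ Z) (q : (F.obj f.left).obj u.right ⟶ Z)
    (h : (F.map f.hom).app u.left ≫ p = (F.obj f.left).map u.hom ≫ q) :
    inr F f u ≫ domDesc p q h = q := pushout.inr_desc _ _ _

lemma inr_domDesc_assoc {f : Arrow C} {u : Arrow D} {Z : E}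
    (p : (F.obj f.right).obj u.left ⟶ Z) (q : (F.obj f.left).obj u.right ⟶ Z)
    (h : (F.map f.hom).app u.left ≫ p = (F.obj f.left).map u.hom ≫ q) {W : E}
    (k : Z ⟶ W) :
    inr F f u ≫ domDesc p q h ≫ k =
      q ≫ k := by
  simp only [← assoc, inr_domDesc]

/-- The action of the Leibniz tensor on the domains of arrows. -/
noncomputable def domMap {f f' : Arrow C} {u u' : Arrow D} (α : f ⟶ f') (β : u ⟶ u') :
    dom F f u ⟶ dom F f' u' :=
  domDesc ((F.map α.right).app u.left ≫ (F.obj f'.right).map β.left ≫ inl F f' u')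
    ((F.map α.left).app u.right ≫ (F.obj f'.left).map β.right ≫ inr F f' u') (by
      rw [← NatTrans.comp_app_assoc, ← F.map_comp, ← Arrow.w, F.map_comp, NatTrans.comp_app_assoc,
        ← NatTrans.naturality_assoc, condition, ← Functor.map_comp_assoc, Arrow.w,
        Functor.map_comp_assoc, NatTrans.naturality_assoc])

lemma inl_domMap {f f' : Arrow C} {u u' : Arrow D} (α : f ⟶ f') (β : u ⟶ u') :
    inl F f u ≫ domMap F α β =
      (F.map α.right).app u.left ≫ (F.obj f'.right).map β.left ≫ inl F f' u' :=
  inl_domDesc _ _ _ _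

lemma inl_domMap_assoc {f f' : Arrow C} {u u' : Arrow D} (α : f ⟶ f') (β : u ⟶ u') {W : E}
    (k : dom F f' u' ⟶ W) :
    inl F f u ≫ domMap F α β ≫ k =
      (F.map α.right).app u.left ≫ (F.obj f'.right).map β.left ≫ inl F f' u' ≫ k := by
  simp only [← assoc, inl_domMap]

lemma inr_domMap {f f' : Arrow C} {u u' : Arrow D} (α : f ⟶ f') (β : u ⟶ u') :
    inr F f u ≫ domMap F α β =
      (F.map α.left).app u.right ≫ (F.obj f'.left).map β.right ≫ inr F f' u' :=
  inr_domDesc _ _ _ _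

lemma inr_domMap_assoc {f f' : Arrow C} {u u' : Arrow D} (α : f ⟶ f') (β : u ⟶ u') {W : E}
    (k : dom F f' u' ⟶ W) :
    inr F f u ≫ domMap F α β ≫ k =
      (F.map α.left).app u.right ≫ (F.obj f'.left).map β.right ≫ inr F f' u' ≫ k := by
  simp only [← assoc, inr_domMap]

/-- The action of the Leibniz tensor on commutative squares. -/
noncomputable def tenMap {f f' : Arrow C} {u u' : Arrow D} (α : f ⟶ f') (β : u ⟶ u') :
    Arrow.mk (ten F f u) ⟶ Arrow.mk (ten F f' u') :=
  Arrow.homMk' (domMap F α β) ((F.map α.right).app u.right ≫ (F.obj f'.right).map β.right) (by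
    apply dom_ext
    · rw [inl_domMap_assoc, inl_ten, inl_ten_assoc, ← Functor.map_comp, Arrow.w,
        Functor.map_comp, NatTrans.naturality_assoc]
    · rw [inr_domMap_assoc, inr_ten, inr_ten_assoc, NatTrans.naturality,
        ← NatTrans.comp_app_assoc, ← NatTrans.comp_app_assoc, ← F.map_comp, ← F.map_comp,
        Arrow.w])

lemma tenMap_id (f : Arrow C) (u : Arrow D) : tenMap F (𝟙 f) (𝟙 u) = 𝟙 _ := by
  apply Arrow.hom_ext
  · change domMap F (𝟙 f) (𝟙 u) = 𝟙 (dom F f u)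
    apply dom_ext
    · simp [inl_domMap]
    · simp [inr_domMap]
  · change (F.map (𝟙 f.right)).app u.right ≫ (F.obj f.right).map (𝟙 u.right) = 𝟙 _
    simp

lemma tenMap_comp {f f' f'' : Arrow C} {u u' u'' : Arrow D} (α : f ⟶ f') (α' : f' ⟶ f'')
    (β : u ⟶ u') (β' : u' ⟶ u'') :
    tenMap F (α ≫ α') (β ≫ β') = tenMap F α β ≫ tenMap F α' β' := by
  apply Arrow.hom_ext
  · change domMap F (α ≫ α') (β ≫ β') = domMap F α β ≫ domMap F α' β'
    apply dom_ext
    · simp [inl_domMap, inl_domMap_assoc]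
    · simp [inr_domMap, inr_domMap_assoc]
  · change (F.map (α.right ≫ α'.right)).app u.right ≫
      (F.obj f''.right).map (β.right ≫ β'.right) =
      ((F.map α.right).app u.right ≫ (F.obj f'.right).map β.right) ≫
        (F.map α'.right).app u'.right ≫ (F.obj f''.right).map β'.right
    simp

/-- The Leibniz tensor as a bifunctor on arrow categories. -/
noncomputable def tenFunctor : Arrow C ⥤ Arrow D ⥤ Arrow E :=
  mkBifunctor (fun f u => Arrow.mk (ten F f u)) (fun α β => tenMap F α β)
    (tenMap_id F) (tenMap_comp F)

end Tensor

section Hom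

variable (G : Cᵒᵖ ⥤ D ⥤ E) [HasPullbacks E]

/-- The codomain of the Leibniz hom of two arrows. -/
noncomputable abbrev cod (u : Arrow C) (g : Arrow D) : E :=
  pullback ((G.obj (op u.left)).map g.hom) ((G.map u.hom.op).app g.right)

/-- The projection `cod ⟶ ⟨L,X⟩`. -/
noncomputable abbrev fst (u : Arrow C) (g : Arrow D) :
    cod G u g ⟶ (G.obj (op u.left)).obj g.left := pullback.fst _ _

/-- The projection `cod ⟶ ⟨K,Y⟩`. -/
noncomputable abbrev snd (u : Arrow C) (g : Arrow D) :
    cod G u g ⟶ (G.obj (op u.right)).obj g.right := pullback.snd _ _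

lemma cod_condition (u : Arrow C) (g : Arrow D) :
    fst G u g ≫ (G.obj (op u.left)).map g.hom = snd G u g ≫ (G.map u.hom.op).app g.right :=
  pullback.condition

lemma cod_condition_assoc (u : Arrow C) (g : Arrow D) {W : E}
    (k : (G.obj (op u.left)).obj g.right ⟶ W) :
    fst G u g ≫ (G.obj (op u.left)).map g.hom ≫ k =
      snd G u g ≫ (G.map u.hom.op).app g.right ≫ k := by
  simp only [← assoc, cod_condition]

lemma cod_ext {u : Arrow C} {g : Arrow D} {Z : E} {p q : Z ⟶ cod G u g}
    (h₁ : p ≫ fst G u g = q ≫ fst G u g) (h₂ : p ≫ snd G u g = q ≫ snd G u g) : p = q :=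
  pullback.hom_ext h₁ h₂

variable {G} in
/-- A map into the pullback `cod G u g`. -/
noncomputable def codLift {u : Arrow C} {g : Arrow D} {Z : E}
    (p : Z ⟶ (G.obj (op u.left)).obj g.left) (q : Z ⟶ (G.obj (op u.right)).obj g.right)
    (h : p ≫ (G.obj (op u.left)).map g.hom = q ≫ (G.map u.hom.op).app g.right) :
    Z ⟶ cod G u g :=
  pullback.lift p q h

lemma codLift_fst {u : Arrow C} {g : Arrow D} {Z : E}
    (p : Z ⟶ (G.obj (op u.left)).obj g.left) (q : Z ⟶ (G.obj (op u.right)).obj g.right)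
    (h : p ≫ (G.obj (op u.left)).map g.hom = q ≫ (G.map u.hom.op).app g.right) :
    codLift p q h ≫ fst G u g = p := pullback.lift_fst _ _ _

lemma codLift_fst_assoc {u : Arrow C} {g : Arrow D} {Z : E}
    (p : Z ⟶ (G.obj (op u.left)).obj g.left) (q : Z ⟶ (G.obj (op u.right)).obj g.right)
    (h : p ≫ (G.obj (op u.left)).map g.hom = q ≫ (G.map u.hom.op).app g.right) {W : E}
    (k : (G.obj (op u.left)).obj g.left ⟶ W) :
    codLift p q h ≫ fst G u g ≫ k =
      p ≫ k := by
  simp only [← assoc, codLift_fst]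

lemma codLift_snd {u : Arrow C} {g : Arrow D} {Z : E}
    (p : Z ⟶ (G.obj (op u.left)).obj g.left) (q : Z ⟶ (G.obj (op u.right)).obj g.right)
    (h : p ≫ (G.obj (op u.left)).map g.hom = q ≫ (G.map u.hom.op).app g.right) :
    codLift p q h ≫ snd G u g = q := pullback.lift_snd _ _ _

lemma codLift_snd_assoc {u : Arrow C} {g : Arrow D} {Z : E}
    (p : Z ⟶ (G.obj (op u.left)).obj g.left) (q : Z ⟶ (G.obj (op u.right)).obj g.right)
    (h : p ≫ (G.obj (op u.left)).map g.hom = q ≫ (G.map u.hom.op).app g.right) {W : E}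
    (k : (G.obj (op u.right)).obj g.right ⟶ W) :
    codLift p q h ≫ snd G u g ≫ k =
      q ≫ k := by
  simp only [← assoc, codLift_snd]

/-- The Leibniz hom of two arrows, as a morphism. -/
noncomputable def lhom (u : Arrow C) (g : Arrow D) :
    (G.obj (op u.right)).obj g.left ⟶ cod G u g :=
  codLift ((G.map u.hom.op).app g.left) ((G.obj (op u.right)).map g.hom)
    ((G.map u.hom.op).naturality g.hom).symm

lemma lhom_fst (u : Arrow C) (g : Arrow D) :
    lhom G u g ≫ fst G u g = (G.map u.hom.op).app g.left := codLift_fst _ _ _ _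

lemma lhom_fst_assoc (u : Arrow C) (g : Arrow D) {W : E}
    (k : (G.obj (op u.left)).obj g.left ⟶ W) :
    lhom G u g ≫ fst G u g ≫ k =
      (G.map u.hom.op).app g.left ≫ k := by
  simp only [← assoc, lhom_fst]

lemma lhom_snd (u : Arrow C) (g : Arrow D) :
    lhom G u g ≫ snd G u g = (G.obj (op u.right)).map g.hom := codLift_snd _ _ _ _

lemma lhom_snd_assoc (u : Arrow C) (g : Arrow D) {W : E}
    (k : (G.obj (op u.right)).obj g.right ⟶ W) :
    lhom G u g ≫ snd G u g ≫ k =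
      (G.obj (op u.right)).map g.hom ≫ k := by
  simp only [← assoc, lhom_snd]

/-- The action of the Leibniz hom on the codomains of arrows. -/
noncomputable def codMap {u u' : Arrow C} {g g' : Arrow D} (α : u' ⟶ u) (β : g ⟶ g') :
    cod G u g ⟶ cod G u' g' :=
  codLift (fst G u g ≫ (G.map α.left.op).app g.left ≫ (G.obj (op u'.left)).map β.left)
    (snd G u g ≫ (G.map α.right.op).app g.right ≫ (G.obj (op u'.right)).map β.right) (by
      rw [assoc, assoc, ← Functor.map_comp, Arrow.w, Functor.map_comp,
        ← NatTrans.naturality_assoc, cod_condition_assoc, assoc, assoc, NatTrans.naturality,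
        ← NatTrans.comp_app_assoc, ← NatTrans.comp_app_assoc, ← G.map_comp, ← G.map_comp,
        ← op_comp, ← op_comp, Arrow.w])

lemma codMap_fst {u u' : Arrow C} {g g' : Arrow D} (α : u' ⟶ u) (β : g ⟶ g') :
    codMap G α β ≫ fst G u' g' =
      fst G u g ≫ (G.map α.left.op).app g.left ≫ (G.obj (op u'.left)).map β.left :=
  codLift_fst _ _ _ _

lemma codMap_fst_assoc {u u' : Arrow C} {g g' : Arrow D} (α : u' ⟶ u) (β : g ⟶ g') {W : E}
    (k : (G.obj (op u'.left)).obj g'.left ⟶ W) :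
    codMap G α β ≫ fst G u' g' ≫ k =
      fst G u g ≫ (G.map α.left.op).app g.left ≫ (G.obj (op u'.left)).map β.left ≫ k := by
  simp only [← assoc, codMap_fst]

lemma codMap_snd {u u' : Arrow C} {g g' : Arrow D} (α : u' ⟶ u) (β : g ⟶ g') :
    codMap G α β ≫ snd G u' g' =
      snd G u g ≫ (G.map α.right.op).app g.right ≫ (G.obj (op u'.right)).map β.right :=
  codLift_snd _ _ _ _

lemma codMap_snd_assoc {u u' : Arrow C} {g g' : Arrow D} (α : u' ⟶ u) (β : g ⟶ g') {W : E}
    (k : (G.obj (op u'.right)).obj g'.right ⟶ W) :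
    codMap G α β ≫ snd G u' g' ≫ k =
      snd G u g ≫ (G.map α.right.op).app g.right ≫ (G.obj (op u'.right)).map β.right ≫ k := by
  simp only [← assoc, codMap_snd]

/-- The action of the Leibniz hom on commutative squares. -/
noncomputable def lhomMap {u u' : Arrow C} {g g' : Arrow D} (α : u' ⟶ u) (β : g ⟶ g') :
    Arrow.mk (lhom G u g) ⟶ Arrow.mk (lhom G u' g') :=
  Arrow.homMk' ((G.map α.right.op).app g.left ≫ (G.obj (op u'.right)).map β.left)
    (codMap G α β) (by
    apply cod_ext
    · rw [assoc, assoc, assoc, codMap_fst, lhom_fst, lhom_fst_assoc, NatTrans.naturality,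
        ← NatTrans.comp_app_assoc, ← NatTrans.comp_app_assoc, ← G.map_comp, ← G.map_comp,
        ← op_comp, ← op_comp, Arrow.w]
    · rw [assoc, assoc, assoc, codMap_snd, lhom_snd, lhom_snd_assoc, ← Functor.map_comp,
        Arrow.w, Functor.map_comp, NatTrans.naturality_assoc])

lemma lhomMap_id (u : Arrow C) (g : Arrow D) : lhomMap G (𝟙 u) (𝟙 g) = 𝟙 _ := by
  apply Arrow.hom_ext
  · change (G.map (𝟙 u.right).op).app g.left ≫ (G.obj (op u.right)).map (𝟙 g.left) = 𝟙 _
    simp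
  · change codMap G (𝟙 u) (𝟙 g) = 𝟙 (cod G u g)
    apply cod_ext
    · simp [codMap_fst]
    · simp [codMap_snd]

lemma lhomMap_comp {u u' u'' : Arrow C} {g g' g'' : Arrow D} (α : u' ⟶ u) (α' : u'' ⟶ u')
    (β : g ⟶ g') (β' : g' ⟶ g'') :
    lhomMap G (α' ≫ α) (β ≫ β') = lhomMap G α β ≫ lhomMap G α' β' := by
  apply Arrow.hom_ext
  · change (G.map (α'.right ≫ α.right).op).app g.left ≫
      (G.obj (op u''.right)).map (β.left ≫ β'.left) =
      ((G.map α.right.op).app g.left ≫ (G.obj (op u'.right)).map β.left) ≫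
        (G.map α'.right.op).app g'.left ≫ (G.obj (op u''.right)).map β'.left
    simp
  · change codMap G (α' ≫ α) (β ≫ β') = codMap G α β ≫ codMap G α' β'
    apply cod_ext
    · simp [codMap_fst, codMap_fst_assoc]
    · simp [codMap_snd, codMap_snd_assoc]

/-- The Leibniz hom as a bifunctor on arrow categories, contravariant in the first variable. -/
noncomputable def lhomFunctor : (Arrow C)ᵒᵖ ⥤ Arrow D ⥤ Arrow E :=
  mkBifunctor (fun u g => Arrow.mk (lhom G u.unop g)) (fun α β => lhomMap G α.unop β)
    (fun u g => lhomMap_id G u.unop g) (fun α α' β β' => lhomMap_comp G α.unop α'.unop β β')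

end Hom

end LeibnizArrow

/-! ### The transposition bijections -/

namespace THC

open LeibnizArrow

variable {𝔸 : Type u₁} {𝕊 : Type u₂} {𝔹 : Type u₃}
  [Category.{v₁} 𝔸] [Category.{v₂} 𝕊] [Category.{v₃} 𝔹] (T : THC 𝔸 𝕊 𝔹)

lemma homEquiv_symm_left {a a' : 𝔸} (h : a' ⟶ a) (s : 𝕊) (b : 𝔹)
    (ψ : a ⟶ (T.hom.obj (op s)).obj b) :
    (T.homEquiv a' s b).symm (h ≫ ψ) =
      (T.tensor.map h).app s ≫ (T.homEquiv a s b).symm ψ := by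
  rw [Equiv.symm_apply_eq, homEquiv_naturality_left, Equiv.apply_symm_apply]

lemma homEquiv_symm_mid (a : 𝔸) {s s' : 𝕊} (w : s ⟶ s') (b : 𝔹)
    (ψ : a ⟶ (T.hom.obj (op s')).obj b) :
    (T.homEquiv a s b).symm (ψ ≫ (T.hom.map w.op).app b) =
      (T.tensor.obj a).map w ≫ (T.homEquiv a s' b).symm ψ := by
  rw [Equiv.symm_apply_eq, homEquiv_naturality_mid, Equiv.apply_symm_apply]

lemma homEquiv_symm_right (a : 𝔸) (s : 𝕊) {b b' : 𝔹} (k : b ⟶ b')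
    (ψ : a ⟶ (T.hom.obj (op s)).obj b) :
    (T.homEquiv a s b').symm (ψ ≫ (T.hom.obj (op s)).map k) =
      (T.homEquiv a s b).symm ψ ≫ k := by
  rw [Equiv.symm_apply_eq, homEquiv_naturality_right, Equiv.apply_symm_apply]

lemma cotensorEquiv_symm_left {a a' : 𝔸} (h : a' ⟶ a) (s : 𝕊) (b : 𝔹)
    (ψ : s ⟶ (T.cotensor.obj (op a)).obj b) :
    (T.cotensorEquiv a' s b).symm (ψ ≫ (T.cotensor.map h.op).app b) =
      (T.tensor.map h).app s ≫ (T.cotensorEquiv a s b).symm ψ := by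
  rw [Equiv.symm_apply_eq, cotensorEquiv_naturality_left, Equiv.apply_symm_apply]

lemma cotensorEquiv_symm_mid (a : 𝔸) {s s' : 𝕊} (w : s ⟶ s') (b : 𝔹)
    (ψ : s' ⟶ (T.cotensor.obj (op a)).obj b) :
    (T.cotensorEquiv a s b).symm (w ≫ ψ) =
      (T.tensor.obj a).map w ≫ (T.cotensorEquiv a s' b).symm ψ := by
  rw [Equiv.symm_apply_eq, cotensorEquiv_naturality_mid, Equiv.apply_symm_apply]

lemma cotensorEquiv_symm_right (a : 𝔸) (s : 𝕊) {b b' : 𝔹} (k : b ⟶ b')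
    (ψ : s ⟶ (T.cotensor.obj (op a)).obj b) :
    (T.cotensorEquiv a s b').symm (ψ ≫ (T.cotensor.obj (op a)).map k) =
      (T.cotensorEquiv a s b).symm ψ ≫ k := by
  rw [Equiv.symm_apply_eq, cotensorEquiv_naturality_right, Equiv.apply_symm_apply]

/-- Joint naturality of `homEquiv` in all three variables. -/
lemma homEquiv_nat {a a' : 𝔸} {s s' : 𝕊} {b b' : 𝔹} (h : a' ⟶ a)
    (w : s' ⟶ s) (k : b ⟶ b') (φ : (T.tensor.obj a).obj s ⟶ b) :
    T.homEquiv a' s' b' ((T.tensor.map h).app s' ≫ (T.tensor.obj a).map w ≫ φ ≫ k) =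
      h ≫ T.homEquiv a s b φ ≫ (T.hom.map w.op).app b ≫ (T.hom.obj (op s')).map k := by
  rw [homEquiv_naturality_left, homEquiv_naturality_mid, homEquiv_naturality_right, assoc,
    NatTrans.naturality]

/-- Joint naturality of `cotensorEquiv` in all three variables. -/
lemma cotensorEquiv_nat {a a' : 𝔸} {s s' : 𝕊} {b b' : 𝔹} (h : a' ⟶ a)
    (w : s' ⟶ s) (k : b ⟶ b') (φ : (T.tensor.obj a).obj s ⟶ b) :
    T.cotensorEquiv a' s' b' ((T.tensor.map h).app s' ≫ (T.tensor.obj a).map w ≫ φ ≫ k) =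
      w ≫ T.cotensorEquiv a s b φ ≫ (T.cotensor.map h.op).app b ≫
        (T.cotensor.obj (op a')).map k := by
  rw [cotensorEquiv_naturality_left, cotensorEquiv_naturality_mid,
    cotensorEquiv_naturality_right, assoc, assoc, NatTrans.naturality]

variable [HasPushouts 𝔹]

variable {T} {f : Arrow 𝔸} {u : Arrow 𝕊} {g : Arrow 𝔹}

/-- Two squares out of `f ⋄ u` agree if their three components do. -/
lemma ten_hom_ext {φ ψ : Arrow.mk (ten T.tensor f u) ⟶ g}
    (h₁ : inl T.tensor f u ≫ φ.left = inl T.tensor f u ≫ ψ.left)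
    (h₂ : inr T.tensor f u ≫ φ.left = inr T.tensor f u ≫ ψ.left)
    (h₃ : φ.right = ψ.right) : φ = ψ :=
  Arrow.hom_ext _ _ (dom_ext _ h₁ h₂) h₃

lemma ten_w_inl (φ : Arrow.mk (ten T.tensor f u) ⟶ g) :
    (inl T.tensor f u ≫ φ.left) ≫ g.hom = (T.tensor.obj f.right).map u.hom ≫ φ.right := by
  have h : φ.left ≫ g.hom = ten T.tensor f u ≫ φ.right := Arrow.w φ
  rw [assoc, h, inl_ten_assoc]

lemma ten_w_inr (φ : Arrow.mk (ten T.tensor f u) ⟶ g) :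
    (inr T.tensor f u ≫ φ.left) ≫ g.hom = (T.tensor.map f.hom).app u.right ≫ φ.right := by
  have h : φ.left ≫ g.hom = ten T.tensor f u ≫ φ.right := Arrow.w φ
  rw [assoc, h, inr_ten_assoc]

lemma ten_w_dom (φ : Arrow.mk (ten T.tensor f u) ⟶ g) :
    (T.tensor.map f.hom).app u.left ≫ inl T.tensor f u ≫ φ.left =
      (T.tensor.obj f.left).map u.hom ≫ inr T.tensor f u ≫ φ.left :=
  condition_assoc _ _ _ _

/-- A square out of `f ⋄ u`, from its three components. -/
noncomputable def tenHomMk (p : (T.tensor.obj f.right).obj u.left ⟶ g.left)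
    (q : (T.tensor.obj f.left).obj u.right ⟶ g.left)
    (r : (T.tensor.obj f.right).obj u.right ⟶ g.right)
    (hpq : (T.tensor.map f.hom).app u.left ≫ p = (T.tensor.obj f.left).map u.hom ≫ q)
    (hpr : p ≫ g.hom = (T.tensor.obj f.right).map u.hom ≫ r)
    (hqr : q ≫ g.hom = (T.tensor.map f.hom).app u.right ≫ r) :
    Arrow.mk (ten T.tensor f u) ⟶ g :=
  Arrow.homMk (domDesc p q hpq) r (by
    change domDesc p q hpq ≫ g.hom = ten T.tensor f u ≫ r
    apply dom_ext
    · rw [inl_domDesc_assoc, inl_ten_assoc, hpr]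
    · rw [inr_domDesc_assoc, inr_ten_assoc, hqr])

section

variable {C D E : Type*} [Category* C] [Category* D] [Category* E] {G : Cᵒᵖ ⥤ D ⥤ E}
  [HasPullbacks E] {e : Arrow E} {c : Arrow C} {d : Arrow D}

/-- Two squares into a Leibniz hom agree if their three components do. -/
lemma lhom_hom_ext {φ ψ : e ⟶ Arrow.mk (lhom G c d)} (h₁ : φ.left = ψ.left)
    (h₂ : φ.right ≫ fst G c d = ψ.right ≫ fst G c d)
    (h₃ : φ.right ≫ snd G c d = ψ.right ≫ snd G c d) : φ = ψ :=
  Arrow.hom_ext _ _ h₁ (cod_ext _ h₂ h₃)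

lemma lhom_w_fst (φ : e ⟶ Arrow.mk (lhom G c d)) :
    e.hom ≫ φ.right ≫ fst G c d = φ.left ≫ (G.map c.hom.op).app d.left := by
  have h : φ.left ≫ lhom G c d = e.hom ≫ φ.right := Arrow.w φ
  rw [← assoc, ← h, assoc, lhom_fst]

lemma lhom_w_snd (φ : e ⟶ Arrow.mk (lhom G c d)) :
    e.hom ≫ φ.right ≫ snd G c d = φ.left ≫ (G.obj (op c.right)).map d.hom := by
  have h : φ.left ≫ lhom G c d = e.hom ≫ φ.right := Arrow.w φ
  rw [← assoc, ← h, assoc, lhom_snd]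

lemma lhom_w_cod (φ : e ⟶ Arrow.mk (lhom G c d)) :
    (φ.right ≫ fst G c d) ≫ (G.obj (op c.left)).map d.hom =
      (φ.right ≫ snd G c d) ≫ (G.map c.hom.op).app d.right := by
  rw [assoc, assoc, cod_condition]

/-- A square into a Leibniz hom, from its three components. -/
noncomputable def lhomHomMk (q : e.left ⟶ (G.obj (op c.right)).obj d.left)
    (p : e.right ⟶ (G.obj (op c.left)).obj d.left)
    (r : e.right ⟶ (G.obj (op c.right)).obj d.right)
    (hpq : e.hom ≫ p = q ≫ (G.map c.hom.op).app d.left)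
    (hqr : e.hom ≫ r = q ≫ (G.obj (op c.right)).map d.hom)
    (hpr : p ≫ (G.obj (op c.left)).map d.hom = r ≫ (G.map c.hom.op).app d.right) :
    e ⟶ Arrow.mk (lhom G c d) :=
  Arrow.homMk q (codLift p r hpr) (by
    change q ≫ lhom G c d = e.hom ≫ codLift p r hpr
    apply cod_ext
    · rw [assoc, assoc, codLift_fst, lhom_fst, hpq]
    · rw [assoc, assoc, codLift_snd, lhom_snd, hqr])

end

/-- Transposition of squares `f ⋄ u ⟶ g` to squares `f ⟶ ⟪u,g⟫`, componentwise. -/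
noncomputable def arrowHomEquiv [HasPullbacks 𝔸] (T : THC 𝔸 𝕊 𝔹)
    (f : Arrow 𝔸) (u : Arrow 𝕊) (g : Arrow 𝔹) :
    (Arrow.mk (ten T.tensor f u) ⟶ g) ≃ (f ⟶ Arrow.mk (lhom T.hom u g)) where
  toFun φ := lhomHomMk (T.homEquiv _ _ _ (inr T.tensor f u ≫ φ.left))
    (T.homEquiv _ _ _ (inl T.tensor f u ≫ φ.left)) (T.homEquiv _ _ _ φ.right)
    (by rw [← homEquiv_naturality_left, ← homEquiv_naturality_mid, ten_w_dom])
    (by rw [← homEquiv_naturality_left, ← homEquiv_naturality_right, ten_w_inr])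
    (by rw [← homEquiv_naturality_right, ← homEquiv_naturality_mid, ten_w_inl])
  invFun ψ := tenHomMk ((T.homEquiv _ _ _).symm (ψ.right ≫ fst T.hom u g))
    ((T.homEquiv _ _ _).symm ψ.left) ((T.homEquiv _ _ _).symm (ψ.right ≫ snd T.hom u g))
    (by rw [← homEquiv_symm_left, ← homEquiv_symm_mid, lhom_w_fst])
    (by rw [← homEquiv_symm_right, ← homEquiv_symm_mid, lhom_w_cod])
    (by rw [← homEquiv_symm_right, ← homEquiv_symm_left, lhom_w_snd])
  left_inv φ := by
    apply ten_hom_ext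
    · refine (inl_domDesc _ _ _ _).trans ?_
      rw [Equiv.symm_apply_eq]
      exact codLift_fst _ _ _ _
    · refine (inr_domDesc _ _ _ _).trans ?_
      exact Equiv.symm_apply_apply _ _
    · change (T.homEquiv _ _ _).symm _ = _
      rw [Equiv.symm_apply_eq]
      exact codLift_snd _ _ _ _
  right_inv ψ := by
    apply lhom_hom_ext
    · change T.homEquiv _ _ _ _ = _
      rw [← Equiv.eq_symm_apply]
      exact inr_domDesc _ _ _ _
    · refine (codLift_fst _ _ _ _).trans ?_
      rw [← Equiv.eq_symm_apply]
      exact inl_domDesc _ _ _ _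
    · refine (codLift_snd _ _ _ _).trans ?_
      exact Equiv.apply_symm_apply _ _

/-- Transposition of squares `f ⋄ u ⟶ g` to squares from `u` to the Leibniz cotensor of
`f` and `g`, componentwise. -/
noncomputable def arrowCotensorEquiv [HasPullbacks 𝕊] (T : THC 𝔸 𝕊 𝔹)
    (f : Arrow 𝔸) (u : Arrow 𝕊) (g : Arrow 𝔹) :
    (Arrow.mk (ten T.tensor f u) ⟶ g) ≃ (u ⟶ Arrow.mk (lhom T.cotensor f g)) where
  toFun φ := lhomHomMk (T.cotensorEquiv _ _ _ (inl T.tensor f u ≫ φ.left))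
    (T.cotensorEquiv _ _ _ (inr T.tensor f u ≫ φ.left)) (T.cotensorEquiv _ _ _ φ.right)
    (by rw [← cotensorEquiv_naturality_left, ← cotensorEquiv_naturality_mid, ten_w_dom])
    (by rw [← cotensorEquiv_naturality_mid, ← cotensorEquiv_naturality_right, ten_w_inl])
    (by rw [← cotensorEquiv_naturality_right, ← cotensorEquiv_naturality_left, ten_w_inr])
  invFun ψ := tenHomMk ((T.cotensorEquiv _ _ _).symm ψ.left)
    ((T.cotensorEquiv _ _ _).symm (ψ.right ≫ fst T.cotensor f g))
    ((T.cotensorEquiv _ _ _).symm (ψ.right ≫ snd T.cotensor f g))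
    (by rw [← cotensorEquiv_symm_left, ← cotensorEquiv_symm_mid, lhom_w_fst])
    (by rw [← cotensorEquiv_symm_right, ← cotensorEquiv_symm_mid, lhom_w_snd])
    (by rw [← cotensorEquiv_symm_right, ← cotensorEquiv_symm_left, lhom_w_cod])
  left_inv φ := by
    apply ten_hom_ext
    · refine (inl_domDesc _ _ _ _).trans ?_
      exact Equiv.symm_apply_apply _ _
    · refine (inr_domDesc _ _ _ _).trans ?_
      rw [Equiv.symm_apply_eq]
      exact codLift_fst _ _ _ _
    · change (T.cotensorEquiv _ _ _).symm _ = _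
      rw [Equiv.symm_apply_eq]
      exact codLift_snd _ _ _ _
  right_inv ψ := by
    apply lhom_hom_ext
    · change T.cotensorEquiv _ _ _ _ = _
      rw [← Equiv.eq_symm_apply]
      exact inl_domDesc _ _ _ _
    · refine (codLift_fst _ _ _ _).trans ?_
      rw [← Equiv.eq_symm_apply]
      exact inr_domDesc _ _ _ _
    · refine (codLift_snd _ _ _ _).trans ?_
      exact Equiv.apply_symm_apply _ _

lemma arrowHomEquiv_nat [HasPullbacks 𝔸] (T : THC 𝔸 𝕊 𝔹)
    {f f' : Arrow 𝔸} {u u' : Arrow 𝕊} {g g' : Arrow 𝔹}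
    (α : f' ⟶ f) (β : u' ⟶ u) (γ : g ⟶ g') (φ : Arrow.mk (ten T.tensor f u) ⟶ g) :
    T.arrowHomEquiv f' u' g' (tenMap T.tensor α β ≫ φ ≫ γ) =
      α ≫ T.arrowHomEquiv f u g φ ≫ lhomMap T.hom β γ := by
  apply lhom_hom_ext
  · refine Eq.trans ?_ (homEquiv_nat T α.left β.right γ.left (inr T.tensor f u ≫ φ.left))
    refine congrArg (T.homEquiv _ _ _) ((inr_domMap_assoc _ _ _ _).trans ?_)
    simp only [assoc]
    rfl
  · refine (codLift_fst _ _ _ _).trans (Eq.trans ?_ ((homEquiv_nat T α.right β.left γ.left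
      (inl T.tensor f u ≫ φ.left)).trans ?_))
    · refine congrArg (T.homEquiv _ _ _) ((inl_domMap_assoc _ _ _ _).trans ?_)
      simp only [assoc]
      rfl
    · change _ = (α.right ≫ codLift _ _ _ ≫ codMap T.hom β γ) ≫ fst T.hom u' g'
      rw [assoc, assoc, codMap_fst, codLift_fst_assoc]
  · refine (codLift_snd _ _ _ _).trans (Eq.trans ?_ ((homEquiv_nat T α.right β.right γ.right
      φ.right).trans ?_))
    · exact congrArg (T.homEquiv _ _ _) (assoc _ _ _)
    · change _ = (α.right ≫ codLift _ _ _ ≫ codMap T.hom β γ) ≫ snd T.hom u' g'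
      rw [assoc, assoc, codMap_snd, codLift_snd_assoc]

lemma arrowCotensorEquiv_nat [HasPullbacks 𝕊] (T : THC 𝔸 𝕊 𝔹)
    {f f' : Arrow 𝔸} {u u' : Arrow 𝕊} {g g' : Arrow 𝔹}
    (α : f' ⟶ f) (β : u' ⟶ u) (γ : g ⟶ g') (φ : Arrow.mk (ten T.tensor f u) ⟶ g) :
    T.arrowCotensorEquiv f' u' g' (tenMap T.tensor α β ≫ φ ≫ γ) =
      β ≫ T.arrowCotensorEquiv f u g φ ≫ lhomMap T.cotensor α γ := by
  apply lhom_hom_ext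
  · refine Eq.trans ?_ (cotensorEquiv_nat T α.right β.left γ.left (inl T.tensor f u ≫ φ.left))
    refine congrArg (T.cotensorEquiv _ _ _) ((inl_domMap_assoc _ _ _ _).trans ?_)
    simp only [assoc]
    rfl
  · refine (codLift_fst _ _ _ _).trans (Eq.trans ?_ ((cotensorEquiv_nat T α.left β.right γ.left
      (inr T.tensor f u ≫ φ.left)).trans ?_))
    · refine congrArg (T.cotensorEquiv _ _ _) ((inr_domMap_assoc _ _ _ _).trans ?_)
      simp only [assoc]
      rfl
    · change _ = (β.right ≫ codLift _ _ _ ≫ codMap T.cotensor α γ) ≫ fst T.cotensor f' g'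
      rw [assoc, assoc, codMap_fst, codLift_fst_assoc]
  · refine (codLift_snd _ _ _ _).trans (Eq.trans ?_ ((cotensorEquiv_nat T α.right β.right
      γ.right φ.right).trans ?_))
    · exact congrArg (T.cotensorEquiv _ _ _) (assoc _ _ _)
    · change _ = (β.right ≫ codLift _ _ _ ≫ codMap T.cotensor α γ) ≫ snd T.cotensor f' g'
      rw [assoc, assoc, codMap_snd, codLift_snd_assoc]

/-- The two-variable adjunction on arrow categories given by the Leibniz operations. -/
noncomputable def arrow [HasPullbacks 𝔸] [HasPullbacks 𝕊] (T : THC 𝔸 𝕊 𝔹) :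
    THC (Arrow 𝔸) (Arrow 𝕊) (Arrow 𝔹) where
  tensor := tenFunctor T.tensor
  hom := lhomFunctor T.hom
  cotensor := lhomFunctor T.cotensor
  homEquiv f u g := T.arrowHomEquiv f u g
  cotensorEquiv f u g := T.arrowCotensorEquiv f u g
  homEquiv_naturality_left α u g φ := by
    change Arrow.mk (ten T.tensor _ u) ⟶ g at φ
    have h := T.arrowHomEquiv_nat α (𝟙 u) (𝟙 g) φ
    rw [lhomMap_id, comp_id, comp_id] at h
    exact h
  homEquiv_naturality_mid f _ _ β g φ := by
    change Arrow.mk (ten T.tensor f _) ⟶ g at φ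
    have h := T.arrowHomEquiv_nat (𝟙 f) β (𝟙 g) φ
    rw [id_comp, comp_id] at h
    exact h
  homEquiv_naturality_right f u _ _ γ φ := by
    change Arrow.mk (ten T.tensor f u) ⟶ _ at φ
    have h := T.arrowHomEquiv_nat (𝟙 f) (𝟙 u) γ φ
    rw [tenMap_id, id_comp, id_comp] at h
    exact h
  cotensorEquiv_naturality_left α u g φ := by
    change Arrow.mk (ten T.tensor _ u) ⟶ g at φ
    have h := T.arrowCotensorEquiv_nat α (𝟙 u) (𝟙 g) φ
    rw [id_comp, comp_id] at h
    exact h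
  cotensorEquiv_naturality_mid f _ _ β g φ := by
    change Arrow.mk (ten T.tensor f _) ⟶ g at φ
    have h := T.arrowCotensorEquiv_nat (𝟙 f) β (𝟙 g) φ
    rw [lhomMap_id, comp_id, comp_id] at h
    exact h
  cotensorEquiv_naturality_right f u _ _ γ φ := by
    change Arrow.mk (ten T.tensor f u) ⟶ _ at φ
    have h := T.arrowCotensorEquiv_nat (𝟙 f) (𝟙 u) γ φ
    rw [tenMap_id, id_comp, id_comp] at h
    exact h

end THC

/-- The Leibniz operations induced by a THC situation on `𝔸`, `𝕊`, `𝔹`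
(with pushouts in `𝔹`, pullbacks in `𝔸` and `𝕊`) form a THC situation (two-variable
adjunction, with bijections natural with respect to morphisms of the arrow categories)
on the arrow categories `𝔸^[1]`, `𝕊^[1]`, `𝔹^[1]`, whose three functors are given on
objects by the Leibniz tensor, the Leibniz hom and the Leibniz cotensor. -/
theorem thc_arrow {𝔸 : Type u₁} {𝕊 : Type u₂} {𝔹 : Type u₃}
    [Category.{v₁} 𝔸] [Category.{v₂} 𝕊] [Category.{v₃} 𝔹]
    (T : THC 𝔸 𝕊 𝔹) [HasPushouts 𝔹] [HasPullbacks 𝔸] [HasPullbacks 𝕊] :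
    ∃ T' : THC (Arrow 𝔸) (Arrow 𝕊) (Arrow 𝔹),
      (∀ (f : Arrow 𝔸) (u : Arrow 𝕊),
        (T'.tensor.obj f).obj u = Arrow.mk (T.leibnizTensor f.hom u.hom)) ∧
      (∀ (u : Arrow 𝕊) (g : Arrow 𝔹),
        (T'.hom.obj (op u)).obj g = Arrow.mk (T.leibnizHom u.hom g.hom)) ∧
      (∀ (f : Arrow 𝔸) (g : Arrow 𝔹),
        (T'.cotensor.obj (op f)).obj g = Arrow.mk (T.leibnizCotensor f.hom g.hom)) := by
  exact ⟨T.arrow, fun _ _ => rfl, fun _ _ => rfl, fun _ _ => rfl⟩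
end

section
/- Let (⊙, ⟨-,-⟩, ⦅-,-⦆) be a two-variable adjunction on 𝔸, 𝕊, 𝔹 with 𝔹 having pushouts and 𝔸 having pullbacks, and let f : A → B, u : L → K, g : X → Y be morphisms. Let (a, b) be a morphism f ⋄ u → g in 𝔹^[1], i.e. a : P → X and b : B ⊙ K → Y with g ∘ a = b ∘ (f ⋄ u), where P = (B ⊙ L) ⊔_{A⊙L} (A ⊙ K). Define â : A → ⟨K,X⟩ as the adjoint transpose of a ∘ i_{A⊙K} under (- ⊙ K) ⊣ ⟨K,-⟩ (i.e. â = ⟨K, a ∘ i_{A⊙K}⟩ ∘ η_{A,(K)}), and define b̂ : B → ⟨L,X⟩ ×_{⟨L,Y⟩} ⟨K,Y⟩ as the map into the pullback induced by the transpose of a ∘ i_{B⊙L} under (- ⊙ L) ⊣ ⟨L,-⟩ and the transpose of b under (- ⊙ K) ⊣ ⟨K,-⟩. Then the square with sides f, â, b̂, ⟪u,g⟫ commutes: ⟪u,g⟫ ∘ â = b̂ ∘ f, so (â, b̂) is a morphism f → ⟪u,g⟫ in 𝔸^[1]. -/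
open CategoryTheory Category Limits Opposite

universe v₁ v₂ v₃ u₁ u₂ u₃

/-- Given a commutative square `(a, b) : f ⋄ u ⟶ g`, the pair `(â, b̂)` —
where `â` is the adjoint transpose of `a ∘ i_{A⊙K}` under `(- ⊙ K) ⊣ ⟨K,-⟩` and `b̂` is the
map into the pullback induced by the transposes of `a ∘ i_{B⊙L}` and of `b` — is a
commutative square `f ⟶ ⟪u,g⟫`: that is, `⟪u,g⟫ ∘ â = b̂ ∘ f`. -/
theorem thc_transpose_square {𝔸 : Type u₁} {𝕊 : Type u₂} {𝔹 : Type u₃}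
    [Category.{v₁} 𝔸] [Category.{v₂} 𝕊] [Category.{v₃} 𝔹]
    (T : THC 𝔸 𝕊 𝔹) [HasPushouts 𝔹] [HasPullbacks 𝔸]
    {A B : 𝔸} (f : A ⟶ B) {L K : 𝕊} (u : L ⟶ K) {X Y : 𝔹} (g : X ⟶ Y)
    (a : pushout ((T.tensor.map f).app L) ((T.tensor.obj A).map u) ⟶ X)
    (b : (T.tensor.obj B).obj K ⟶ Y)
    (sq : a ≫ g = T.leibnizTensor f u ≫ b)
    (bhat : B ⟶ pullback ((T.hom.obj (op L)).map g) ((T.hom.map u.op).app Y))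
    (hbhat₁ : bhat ≫ pullback.fst _ _ = T.homEquiv B L X (pushout.inl _ _ ≫ a))
    (hbhat₂ : bhat ≫ pullback.snd _ _ = T.homEquiv B K Y b) :
    T.homEquiv A K X (pushout.inr _ _ ≫ a) ≫ T.leibnizHom u g = f ≫ bhat := by
  apply pullback.hom_ext
  -- Into `⟨L,X⟩`, both sides transpose the same map `A ⊙ L ⟶ X`, by the pushout relation.
  · simp only [assoc, THC.leibnizHom, pullback.lift_fst]
    rw [hbhat₁, ← T.homEquiv_naturality_mid, ← T.homEquiv_naturality_left,
      pushout.condition_assoc]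
  -- Into `⟨K,Y⟩`, the two sides transpose the two sides of `sq` restricted to `A ⊙ K`.
  · simp only [assoc, THC.leibnizHom, pullback.lift_snd]
    rw [hbhat₂, ← T.homEquiv_naturality_right, ← T.homEquiv_naturality_left, assoc, sq,
      THC.leibnizTensor, pushout.inr_desc_assoc]
end

section
/- Let (⊙, ⟨-,-⟩, ⦅-,-⦆) be a two-variable adjunction on 𝔸, 𝕊, 𝔹 with 𝔹 having pushouts and 𝔸 having pullbacks, and let f : A → B, u : L → K, g : X → Y be morphisms. Let (x, y) be a morphism f → ⟪u,g⟫ in 𝔸^[1], i.e. x : A → ⟨K,X⟩ and y : B → Q with ⟪u,g⟫ ∘ x = y ∘ f, where Q = ⟨L,X⟩ ×_{⟨L,Y⟩} ⟨K,Y⟩ with projections p₁ : Q → ⟨L,X⟩ and p₂ : Q → ⟨K,Y⟩. Define x̃ : P → X as the map out of the pushout P = (B ⊙ L) ⊔_{A⊙L} (A ⊙ K) induced by ε_{X,(K)} ∘ (x ⊙ K) : A ⊙ K → X and ε_{X,(L)} ∘ ((p₁ ∘ y) ⊙ L) : B ⊙ L → X, and define ỹ = ε_{Y,(K)} ∘ ((p₂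 ∘ y) ⊙ K) : B ⊙ K → Y. Then g ∘ x̃ = ỹ ∘ (f ⋄ u), so (x̃, ỹ) is a morphism f ⋄ u → g in 𝔹^[1]. -/
/-!
A map out of the pushout is determined by its restrictions to `B ⊙ L` and `A ⊙ K`, so the claim
splits in two, and each half may be checked after transposing along `T.homEquiv`. By naturality,
the half on `B ⊙ L` becomes the commutativity of the pullback square precomposed with `y`, and
the half on `A ⊙ K` becomes the second component of `⟪u,g⟫ ∘ x = y ∘ f`.
-/

open CategoryTheory Category Limits Opposite

universe v₁ v₂ v₃ u₁ u₂ u₃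

/-- Given a commutative square `(x, y) : f ⟶ ⟪u,g⟫`, the pair `(x̃, ỹ)` —
where `x̃` is the map out of the pushout induced by `ε_{X,(K)} ∘ (x ⊙ K)` (the inverse
transpose of `x`) and `ε_{X,(L)} ∘ ((p₁ ∘ y) ⊙ L)` (the inverse transpose of `p₁ ∘ y`),
and `ỹ = ε_{Y,(K)} ∘ ((p₂ ∘ y) ⊙ K)` is the inverse transpose of `p₂ ∘ y` — is a
commutative square `f ⋄ u ⟶ g`: that is, `g ∘ x̃ = ỹ ∘ (f ⋄ u)`. -/
theorem thc_untranspose_square {𝔸 : Type u₁} {𝕊 : Type u₂} {𝔹 : Type u₃}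
    [Category.{v₁} 𝔸] [Category.{v₂} 𝕊] [Category.{v₃} 𝔹]
    (T : THC 𝔸 𝕊 𝔹) [HasPushouts 𝔹] [HasPullbacks 𝔸]
    {A B : 𝔸} (f : A ⟶ B) {L K : 𝕊} (u : L ⟶ K) {X Y : 𝔹} (g : X ⟶ Y)
    (x : A ⟶ (T.hom.obj (op K)).obj X)
    (y : B ⟶ pullback ((T.hom.obj (op L)).map g) ((T.hom.map u.op).app Y))
    (sq : x ≫ T.leibnizHom u g = f ≫ y)
    (xt : pushout ((T.tensor.map f).app L) ((T.tensor.obj A).map u) ⟶ X)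
    (hxt₁ : pushout.inl _ _ ≫ xt = (T.homEquiv B L X).symm (y ≫ pullback.fst _ _))
    (hxt₂ : pushout.inr _ _ ≫ xt = (T.homEquiv A K X).symm x) :
    xt ≫ g = T.leibnizTensor f u ≫ (T.homEquiv B K Y).symm (y ≫ pullback.snd _ _) := by
  have sq₂ : x ≫ (T.hom.obj (op K)).map g = f ≫ y ≫ pullback.snd _ _ := by
    have hsnd : T.leibnizHom u g ≫ pullback.snd _ _ = (T.hom.obj (op K)).map g :=
      pullback.lift_snd _ _ _
    rw [← hsnd, reassoc_of% sq]
  apply pushout.hom_ext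
  -- On `B ⊙ L`, both sides transpose to the two composites of the pullback square after `y`.
  · rw [reassoc_of% hxt₁, THC.leibnizTensor, pushout.inl_desc_assoc]
    apply (T.homEquiv B L Y).injective
    rw [T.homEquiv_naturality_right, T.homEquiv_naturality_mid, Equiv.apply_symm_apply,
      Equiv.apply_symm_apply, assoc, assoc, pullback.condition]
  -- On `A ⊙ K`, both sides transpose to the `⟨K,Y⟩`-component of the given square.
  · rw [reassoc_of% hxt₂, THC.leibnizTensor, pushout.inr_desc_assoc]
    apply (T.homEquiv A K Y).injective
    rw [T.homEquiv_naturality_right, T.homEquiv_naturality_left, Equiv.apply_symm_apply,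
      Equiv.apply_symm_apply, sq₂]
end

section
/- Let (⊙, ⟨-,-⟩, ⦅-,-⦆) be a two-variable adjunction on 𝔸, 𝕊, 𝔹 with 𝔹 having pushouts and 𝔸 having pullbacks, and let f : A → B, u : L → K, g : X → Y be morphisms. Let φ : 𝔹^[1](f ⋄ u, g) → 𝔸^[1](f, ⟪u,g⟫) send (a,b) to (â, b̂), where â is the transpose of a ∘ i_{A⊙K} under (- ⊙ K) ⊣ ⟨K,-⟩ and b̂ is induced into the pullback by the transpose of a ∘ i_{B⊙L} and the transpose of b; and let ψ : 𝔸^[1](f, ⟪u,g⟫) → 𝔹^[1](f ⋄ u, g) send (x,y) to (x̃, ỹ), where x̃ is induced out of the pushout by ε_{X,(K)} ∘ (x ⊙ K) and ε_{X,(L)} ∘ ((p₁∘y) ⊙ L), and ỹ = ε_{Y,(K)} ∘ ((p₂∘y) ⊙ K). Then φ and ψ are mutually inverse bijections. -/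
/-!
A square `f ⋄ u ⟶ g` amounts, by the universal property of the pushout, to three maps
`B ⊙ L ⟶ X`, `A ⊙ K ⟶ X`, `B ⊙ K ⟶ Y` subject to three equations between maps out of `A ⊙ L`,
`B ⊙ L` and `A ⊙ K`. A square `f ⟶ ⟪u,g⟫` amounts, by the universal property of the pullback, to
three maps `B ⟶ ⟨L,X⟩`, `A ⟶ ⟨K,X⟩`, `B ⟶ ⟨K,Y⟩` subject to three equations. Transposition is a
bijection on the maps, and its naturality in each of the three variables matches the equations.
-/

open CategoryTheory Category Limits Opposite

universe v₁ v₂ v₃ u₁ u₂ u₃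

/-- The correspondence `φ` sending a square `(a,b) : f ⋄ u ⟶ g` to the
square `(â, b̂) : f ⟶ ⟪u,g⟫` (where `â` is the transpose of `a ∘ i_{A⊙K}` and `b̂` is
induced into the pullback by the transposes of `a ∘ i_{B⊙L}` and of `b`), and the
correspondence `ψ` sending a square `(x,y) : f ⟶ ⟪u,g⟫` to the square `(x̃, ỹ) : f ⋄ u ⟶ g`
(where `x̃` is induced out of the pushout by the inverse transposes of `x` and of `p₁ ∘ y`,
and `ỹ` is the inverse transpose of `p₂ ∘ y`), are mutually inverse bijections. -/
theorem thc_phi_psi_inverse {𝔸 : Type u₁} {𝕊 : Type u₂} {𝔹 : Type u₃}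
    [Category.{v₁} 𝔸] [Category.{v₂} 𝕊] [Category.{v₃} 𝔹]
    (T : THC 𝔸 𝕊 𝔹) [HasPushouts 𝔹] [HasPullbacks 𝔸]
    {A B : 𝔸} (f : A ⟶ B) {L K : 𝕊} (u : L ⟶ K) {X Y : 𝔹} (g : X ⟶ Y) :
    ∃ (φ : {p : (pushout ((T.tensor.map f).app L) ((T.tensor.obj A).map u) ⟶ X) ×
              ((T.tensor.obj B).obj K ⟶ Y) // p.1 ≫ g = T.leibnizTensor f u ≫ p.2} →
          {q : (A ⟶ (T.hom.obj (op K)).obj X) ×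
              (B ⟶ pullback ((T.hom.obj (op L)).map g) ((T.hom.map u.op).app Y)) //
            q.1 ≫ T.leibnizHom u g = f ≫ q.2})
      (ψ : {q : (A ⟶ (T.hom.obj (op K)).obj X) ×
              (B ⟶ pullback ((T.hom.obj (op L)).map g) ((T.hom.map u.op).app Y)) //
            q.1 ≫ T.leibnizHom u g = f ≫ q.2} →
          {p : (pushout ((T.tensor.map f).app L) ((T.tensor.obj A).map u) ⟶ X) ×
              ((T.tensor.obj B).obj K ⟶ Y) // p.1 ≫ g = T.leibnizTensor f u ≫ p.2}),
      (∀ p, (φ p).1.1 = T.homEquiv A K X (pushout.inr _ _ ≫ p.1.1) ∧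
        (φ p).1.2 ≫ pullback.fst _ _ = T.homEquiv B L X (pushout.inl _ _ ≫ p.1.1) ∧
        (φ p).1.2 ≫ pullback.snd _ _ = T.homEquiv B K Y p.1.2) ∧
      (∀ q, pushout.inl _ _ ≫ (ψ q).1.1 =
          (T.homEquiv B L X).symm (q.1.2 ≫ pullback.fst _ _) ∧
        pushout.inr _ _ ≫ (ψ q).1.1 = (T.homEquiv A K X).symm q.1.1 ∧
        (ψ q).1.2 = (T.homEquiv B K Y).symm (q.1.2 ≫ pullback.snd _ _)) ∧
      Function.LeftInverse ψ φ ∧ Function.RightInverse ψ φ := by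
  -- The squares `(a, b)` and `(x, y)` correspond as soon as their components are transposes;
  -- existence in each direction is proved first, and `φ`, `ψ` are then chosen.
  have H1 : ∀ p : {p : (pushout ((T.tensor.map f).app L) ((T.tensor.obj A).map u) ⟶ X) ×
      ((T.tensor.obj B).obj K ⟶ Y) // p.1 ≫ g = T.leibnizTensor f u ≫ p.2},
      ∃ q : {q : (A ⟶ (T.hom.obj (op K)).obj X) ×
        (B ⟶ pullback ((T.hom.obj (op L)).map g) ((T.hom.map u.op).app Y)) //
        q.1 ≫ T.leibnizHom u g = f ≫ q.2},
      q.1.1 = T.homEquiv A K X (pushout.inr _ _ ≫ p.1.1) ∧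
        q.1.2 ≫ pullback.fst _ _ = T.homEquiv B L X (pushout.inl _ _ ≫ p.1.1) ∧
        q.1.2 ≫ pullback.snd _ _ = T.homEquiv B K Y p.1.2 := by
    rintro ⟨⟨a, b⟩, hp⟩
    dsimp only at hp
    have hl : (pushout.inl _ _ ≫ a) ≫ g = (T.tensor.obj B).map u ≫ b := by
      rw [assoc, hp, THC.leibnizTensor, pushout.inl_desc_assoc]
    have hr : (pushout.inr _ _ ≫ a) ≫ g = (T.tensor.map f).app K ≫ b := by
      rw [assoc, hp, THC.leibnizTensor, pushout.inr_desc_assoc]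
    refine ⟨⟨⟨T.homEquiv A K X (pushout.inr _ _ ≫ a),
      pullback.lift (T.homEquiv B L X (pushout.inl _ _ ≫ a)) (T.homEquiv B K Y b) ?_⟩, ?_⟩,
      rfl, pullback.lift_fst _ _ _, pullback.lift_snd _ _ _⟩
    · rw [← T.homEquiv_naturality_right, hl, T.homEquiv_naturality_mid]
    · dsimp only
      rw [THC.leibnizHom]
      apply pullback.hom_ext
      · rw [assoc, assoc, pullback.lift_fst, pullback.lift_fst, ← T.homEquiv_naturality_mid,
          ← T.homEquiv_naturality_left, pushout.condition_assoc]
      · rw [assoc, assoc, pullback.lift_snd, pullback.lift_snd, ← T.homEquiv_naturality_right,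
          ← T.homEquiv_naturality_left, hr]
  have H2 : ∀ q : {q : (A ⟶ (T.hom.obj (op K)).obj X) ×
        (B ⟶ pullback ((T.hom.obj (op L)).map g) ((T.hom.map u.op).app Y)) //
        q.1 ≫ T.leibnizHom u g = f ≫ q.2},
      ∃ p : {p : (pushout ((T.tensor.map f).app L) ((T.tensor.obj A).map u) ⟶ X) ×
        ((T.tensor.obj B).obj K ⟶ Y) // p.1 ≫ g = T.leibnizTensor f u ≫ p.2},
      pushout.inl _ _ ≫ p.1.1 = (T.homEquiv B L X).symm (q.1.2 ≫ pullback.fst _ _) ∧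
        pushout.inr _ _ ≫ p.1.1 = (T.homEquiv A K X).symm q.1.1 ∧
        p.1.2 = (T.homEquiv B K Y).symm (q.1.2 ≫ pullback.snd _ _) := by
    rintro ⟨⟨x, y⟩, hq⟩
    dsimp only at hq
    have hf : x ≫ (T.hom.map u.op).app X = f ≫ y ≫ pullback.fst _ _ := by
      rw [← assoc, ← hq, THC.leibnizHom, assoc, pullback.lift_fst]
    have hs : x ≫ (T.hom.obj (op K)).map g = f ≫ y ≫ pullback.snd _ _ := by
      rw [← assoc, ← hq, THC.leibnizHom, assoc, pullback.lift_snd]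
    refine ⟨⟨⟨pushout.desc ((T.homEquiv B L X).symm (y ≫ pullback.fst _ _))
      ((T.homEquiv A K X).symm x) ?_, (T.homEquiv B K Y).symm (y ≫ pullback.snd _ _)⟩, ?_⟩,
      pushout.inl_desc _ _ _, pushout.inr_desc _ _ _, rfl⟩
    · apply (T.homEquiv A L X).injective
      rw [T.homEquiv_naturality_left, T.homEquiv_naturality_mid, Equiv.apply_symm_apply,
        Equiv.apply_symm_apply, hf]
    · dsimp only
      rw [THC.leibnizTensor]
      apply pushout.hom_ext
      · rw [pushout.inl_desc_assoc, pushout.inl_desc_assoc]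
        apply (T.homEquiv B L Y).injective
        rw [T.homEquiv_naturality_right, T.homEquiv_naturality_mid, Equiv.apply_symm_apply,
          Equiv.apply_symm_apply, assoc, assoc, pullback.condition]
      · rw [pushout.inr_desc_assoc, pushout.inr_desc_assoc]
        apply (T.homEquiv A K Y).injective
        rw [T.homEquiv_naturality_right, T.homEquiv_naturality_left, Equiv.apply_symm_apply,
          Equiv.apply_symm_apply, hs]
  choose φ hφ using H1
  choose ψ hψ using H2
  refine ⟨φ, ψ, hφ, hψ, fun p => ?_, fun q => ?_⟩
  · obtain ⟨h1, h2, h3⟩ := hφ p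
    obtain ⟨k1, k2, k3⟩ := hψ (φ p)
    apply Subtype.ext
    apply Prod.ext
    · apply pushout.hom_ext
      · rw [k1, h2, Equiv.symm_apply_apply]
      · rw [k2, h1, Equiv.symm_apply_apply]
    · rw [k3, h3, Equiv.symm_apply_apply]
  · obtain ⟨h1, h2, h3⟩ := hφ (ψ q)
    obtain ⟨k1, k2, k3⟩ := hψ q
    apply Subtype.ext
    apply Prod.ext
    · rw [h1, k2, Equiv.apply_symm_apply]
    · apply pullback.hom_ext
      · rw [h2, k1, Equiv.apply_symm_apply]
      · rw [h3, k3, Equiv.apply_symm_apply]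
end

section
/- Let (⊙, ⟨-,-⟩, ⦅-,-⦆) be a two-variable adjunction on 𝔸, 𝕊, 𝔹 with 𝔹 having pushouts and 𝔸 having pullbacks, and let f : A → B, u : L → K, g : X → Y be morphisms. Suppose (a, b) : f ⋄ u → g is a commutative square and α : B ⊙ K → X is a diagonal filler for it, i.e. α ∘ (f ⋄ u) = a and g ∘ α = b. Then the mate α̂ := ⟨K, α⟩ ∘ η_{B,(K)} : B → ⟨K,X⟩ is a diagonal filler for the corresponding square (â, b̂) : f → ⟪u,g⟫, i.e. α̂ ∘ f = â and ⟪u,g⟫ ∘ α̂ = b̂ (where â is the transpose of a ∘ i_{A⊙K} and b̂ is induced into the pullback by the transposes of a ∘ i_{B⊙L} and of b). -/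
open CategoryTheory Category Limits Opposite

universe v₁ v₂ v₃ u₁ u₂ u₃

/-- If `α : B ⊙ K ⟶ X` is a diagonal filler for a commutative square
`(a, b) : f ⋄ u ⟶ g`, then its mate `α̂ = ⟨K,α⟩ ∘ η_{B,(K)}` (the adjoint transpose of `α`
under `(- ⊙ K) ⊣ ⟨K,-⟩`) is a diagonal filler for the transposed square
`(â, b̂) : f ⟶ ⟪u,g⟫`: that is, `α̂ ∘ f = â` and `⟪u,g⟫ ∘ α̂ = b̂`. -/
theorem thc_filler_transpose {𝔸 : Type u₁} {𝕊 : Type u₂} {𝔹 : Type u₃}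
    [Category.{v₁} 𝔸] [Category.{v₂} 𝕊] [Category.{v₃} 𝔹]
    (T : THC 𝔸 𝕊 𝔹) [HasPushouts 𝔹] [HasPullbacks 𝔸]
    {A B : 𝔸} (f : A ⟶ B) {L K : 𝕊} (u : L ⟶ K) {X Y : 𝔹} (g : X ⟶ Y)
    (a : pushout ((T.tensor.map f).app L) ((T.tensor.obj A).map u) ⟶ X)
    (b : (T.tensor.obj B).obj K ⟶ Y)
    (sq : a ≫ g = T.leibnizTensor f u ≫ b)
    (α : (T.tensor.obj B).obj K ⟶ X)
    (hα₁ : T.leibnizTensor f u ≫ α = a) (hα₂ : α ≫ g = b)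
    (bhat : B ⟶ pullback ((T.hom.obj (op L)).map g) ((T.hom.map u.op).app Y))
    (hbhat₁ : bhat ≫ pullback.fst _ _ = T.homEquiv B L X (pushout.inl _ _ ≫ a))
    (hbhat₂ : bhat ≫ pullback.snd _ _ = T.homEquiv B K Y b) :
    f ≫ T.homEquiv B K X α = T.homEquiv A K X (pushout.inr _ _ ≫ a) ∧
      T.homEquiv B K X α ≫ T.leibnizHom u g = bhat := by
  subst hα₁ hα₂
  refine ⟨?_, ?_⟩
  · rw [← T.homEquiv_naturality_left]
    rw [THC.leibnizTensor, ← assoc, pushout.inr_desc]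
  · -- Compare the two projections of the pullback, via naturality in `𝕊` and in `𝔹`.
    apply pullback.hom_ext
    · rw [hbhat₁, THC.leibnizHom, assoc, pullback.lift_fst, ← T.homEquiv_naturality_mid]
      rw [THC.leibnizTensor, ← assoc, pushout.inl_desc]
    · rw [hbhat₂, THC.leibnizHom, assoc, pullback.lift_snd, ← T.homEquiv_naturality_right]
end

section
/- Let (⊙, ⟨-,-⟩, ⦅-,-⦆) be a two-variable adjunction on 𝔸, 𝕊, 𝔹 with 𝔹 having pushouts and 𝔸 having pullbacks, and let f : A → B, u : L → K, g : X → Y be morphisms. Suppose (x, y) : f → ⟪u,g⟫ is a commutative square admitting a diagonal filler β : B → ⟨K,X⟩ (i.e. β ∘ f = x and ⟪u,g⟫ ∘ β = y). Then the corresponding square (x̃, ỹ) : f ⋄ u → g admits the diagonal filler β̃ := ε_{X,(K)} ∘ (β ⊙ K) : B ⊙ K → X, i.e. β̃ ∘ (f ⋄ u) = x̃ and g ∘ β̃ = ỹ (where x̃ is induced out of the pushout by ε_{X,(K)} ∘ (x ⊙ K) and ε_{X,(L)} ∘ ((p₁∘y) ⊙ L), and ỹ = ε_{Y,(K)} ∘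 ((p₂∘y) ⊙ K)). -/
/-!
All equations are checked after transposing along `𝔹(a ⊙ s, b) ≅ 𝔸(a, ⟨s,b⟩)`. A map out of the
pushout is determined by its two legs: on `B ⊙ L` the first equation becomes
`β ≫ ⟨u,X⟩ = y ≫ p₁` by naturality in `s`, and on `A ⊙ K` it becomes `f ≫ β = x` by naturality
in `a`. The second equation becomes `β ≫ ⟨K,g⟩ = y ≫ p₂` by naturality in `b`. The two identities
involving `y` are the components of `β ≫ ⟪u,g⟫ = y`.
-/

open CategoryTheory Category Limits Opposite

universe v₁ v₂ v₃ u₁ u₂ u₃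

/-- If `β : B ⟶ ⟨K,X⟩` is a diagonal filler for a commutative square
`(x, y) : f ⟶ ⟪u,g⟫`, then `β̃ = ε_{X,(K)} ∘ (β ⊙ K)` (the inverse adjoint transpose of `β`
under `(- ⊙ K) ⊣ ⟨K,-⟩`) is a diagonal filler for the corresponding square
`(x̃, ỹ) : f ⋄ u ⟶ g`: that is, `β̃ ∘ (f ⋄ u) = x̃` and `g ∘ β̃ = ỹ`. -/
theorem thc_filler_untranspose {𝔸 : Type u₁} {𝕊 : Type u₂} {𝔹 : Type u₃}
    [Category.{v₁} 𝔸] [Category.{v₂} 𝕊] [Category.{v₃} 𝔹]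
    (T : THC 𝔸 𝕊 𝔹) [HasPushouts 𝔹] [HasPullbacks 𝔸]
    {A B : 𝔸} (f : A ⟶ B) {L K : 𝕊} (u : L ⟶ K) {X Y : 𝔹} (g : X ⟶ Y)
    (x : A ⟶ (T.hom.obj (op K)).obj X)
    (y : B ⟶ pullback ((T.hom.obj (op L)).map g) ((T.hom.map u.op).app Y))
    (sq : x ≫ T.leibnizHom u g = f ≫ y)
    (β : B ⟶ (T.hom.obj (op K)).obj X)
    (hβ₁ : f ≫ β = x) (hβ₂ : β ≫ T.leibnizHom u g = y)
    (xt : pushout ((T.tensor.map f).app L) ((T.tensor.obj A).map u) ⟶ X)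
    (hxt₁ : pushout.inl _ _ ≫ xt = (T.homEquiv B L X).symm (y ≫ pullback.fst _ _))
    (hxt₂ : pushout.inr _ _ ≫ xt = (T.homEquiv A K X).symm x) :
    T.leibnizTensor f u ≫ (T.homEquiv B K X).symm β = xt ∧
      (T.homEquiv B K X).symm β ≫ g = (T.homEquiv B K Y).symm (y ≫ pullback.snd _ _) := by
  have inl_tensor : pushout.inl _ _ ≫ T.leibnizTensor f u = (T.tensor.obj B).map u :=
    pushout.inl_desc _ _ _
  have inr_tensor : pushout.inr _ _ ≫ T.leibnizTensor f u = (T.tensor.map f).app K :=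
    pushout.inr_desc _ _ _
  have hom_fst : T.leibnizHom u g ≫ pullback.fst _ _ = (T.hom.map u.op).app X :=
    pullback.lift_fst _ _ _
  have hom_snd : T.leibnizHom u g ≫ pullback.snd _ _ = (T.hom.obj (op K)).map g :=
    pullback.lift_snd _ _ _
  subst hβ₁ hβ₂
  refine ⟨?_, ?_⟩
  · apply pushout.hom_ext
    · rw [hxt₁, Equiv.eq_symm_apply, ← assoc, inl_tensor, T.homEquiv_naturality_mid,
        Equiv.apply_symm_apply, assoc, hom_fst]
    · rw [hxt₂, Equiv.eq_symm_apply, ← assoc, inr_tensor, T.homEquiv_naturality_left,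
        Equiv.apply_symm_apply]
  · rw [Equiv.eq_symm_apply, T.homEquiv_naturality_right, Equiv.apply_symm_apply, assoc, hom_snd]
end

section
/- Let (⊙, ⟨-,-⟩, ⦅-,-⦆) be a two-variable adjunction on 𝔸, 𝕊, 𝔹 with 𝔹 having pushouts and 𝔸 and 𝕊 having pullbacks. For morphisms f : A → B in 𝔸, u : L → K in 𝕊, g : X → Y in 𝔹: f has the left lifting property with respect to the Leibniz hom ⟪u,g⟫ if and only if u has the left lifting property with respect to the Leibniz cotensor ⦅f,g⦆. -/
/-!
Both lifting properties are transposes of one statement in `𝔹`: any compatible triple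
`α : B ⊙ L ⟶ X`, `β : A ⊙ K ⟶ X`, `γ : B ⊙ K ⟶ Y` is induced by some `δ : B ⊙ K ⟶ X`
(that is, `f ⋄ u` lifts against `g`, with maps out of the pushout written as pairs). This is
`THC.LeibnizLifting`. A square from `f` to `⟪u,g⟫`, or from `u` to `⦅f,g⦆`, amounts to three maps
satisfying three equations, and naturality of the hom bijections turns these data and their
fillers into such triples and such `δ`: `THC.hasLiftingProperty_leibnizHom_iff` and
`THC.hasLiftingProperty_leibnizCotensor_iff`.
-/

open CategoryTheory Category Limits Opposite

universe v₁ v₂ v₃ u₁ u₂ u₃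

namespace THC

variable {𝔸 : Type u₁} {𝕊 : Type u₂} {𝔹 : Type u₃}
  [Category.{v₁} 𝔸] [Category.{v₂} 𝕊] [Category.{v₃} 𝔹]

/-- The left lifting property of `f ⋄ u` with respect to `g`, with each map out of the pushout
`(B ⊙ L) ⊔_{A⊙L} (A ⊙ K)` given as a compatible pair `(α, β)`. -/
def LeibnizLifting (T : THC 𝔸 𝕊 𝔹) {A B : 𝔸} (f : A ⟶ B) {L K : 𝕊} (u : L ⟶ K)
    {X Y : 𝔹} (g : X ⟶ Y) : Prop :=
  ∀ (α : (T.tensor.obj B).obj L ⟶ X) (β : (T.tensor.obj A).obj K ⟶ X)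
    (γ : (T.tensor.obj B).obj K ⟶ Y),
    (T.tensor.map f).app L ≫ α = (T.tensor.obj A).map u ≫ β →
    α ≫ g = (T.tensor.obj B).map u ≫ γ →
    β ≫ g = (T.tensor.map f).app K ≫ γ →
    ∃ δ : (T.tensor.obj B).obj K ⟶ X,
      (T.tensor.map f).app K ≫ δ = β ∧ (T.tensor.obj B).map u ≫ δ = α ∧ δ ≫ g = γ

theorem hasLiftingProperty_leibnizHom_iff (T : THC 𝔸 𝕊 𝔹) [HasPullbacks 𝔸]
    {A B : 𝔸} (f : A ⟶ B) {L K : 𝕊} (u : L ⟶ K) {X Y : 𝔹} (g : X ⟶ Y) :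
    HasLiftingProperty f (T.leibnizHom u g) ↔ T.LeibnizLifting f u g := by
  constructor
  · intro h α β γ h1 h2 h3
    have e2 : T.homEquiv B L X α ≫ (T.hom.obj (op L)).map g =
        T.homEquiv B K Y γ ≫ (T.hom.map u.op).app Y := by
      rw [← T.homEquiv_naturality_right, h2, T.homEquiv_naturality_mid]
    have sq : CommSq (T.homEquiv A K X β) f (T.leibnizHom u g)
        (pullback.lift (T.homEquiv B L X α) (T.homEquiv B K Y γ) e2) := by
      constructor
      apply pullback.hom_ext
      · simp only [leibnizHom, assoc, pullback.lift_fst]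
        rw [← T.homEquiv_naturality_left, h1, T.homEquiv_naturality_mid]
      · simp only [leibnizHom, assoc, pullback.lift_snd]
        rw [← T.homEquiv_naturality_left, ← h3, T.homEquiv_naturality_right]
    obtain ⟨⟨l, hl, hr⟩⟩ := (h.sq_hasLift sq).exists_lift
    obtain ⟨δ, rfl⟩ := (T.homEquiv B K X).surjective l
    refine ⟨δ, (T.homEquiv A K X).injective ?_, (T.homEquiv B L X).injective ?_,
      (T.homEquiv B K Y).injective ?_⟩
    · rw [T.homEquiv_naturality_left, hl]
    · have := hr =≫ pullback.fst _ _
      simp only [leibnizHom, assoc, pullback.lift_fst] at this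
      rw [T.homEquiv_naturality_mid, this]
    · have := hr =≫ pullback.snd _ _
      simp only [leibnizHom, assoc, pullback.lift_snd] at this
      rw [T.homEquiv_naturality_right, this]
  · intro h
    refine ⟨fun {t b} sq => ?_⟩
    obtain ⟨β, rfl⟩ := (T.homEquiv A K X).surjective t
    obtain ⟨α, hα⟩ := (T.homEquiv B L X).surjective (b ≫ pullback.fst _ _)
    obtain ⟨γ, hγ⟩ := (T.homEquiv B K Y).surjective (b ≫ pullback.snd _ _)
    have w1 := sq.w =≫ pullback.fst _ _
    have w2 := sq.w =≫ pullback.snd _ _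
    simp only [leibnizHom, assoc, pullback.lift_fst, pullback.lift_snd] at w1 w2
    obtain ⟨δ, d1, d2, d3⟩ := h α β γ
      ((T.homEquiv A L X).injective (by
        rw [T.homEquiv_naturality_left, T.homEquiv_naturality_mid, hα, w1]))
      ((T.homEquiv B L Y).injective (by
        rw [T.homEquiv_naturality_right, T.homEquiv_naturality_mid, hα, hγ, assoc, assoc,
          pullback.condition]))
      ((T.homEquiv A K Y).injective (by
        rw [T.homEquiv_naturality_right, T.homEquiv_naturality_left, hγ, w2]))
    refine ⟨⟨⟨T.homEquiv B K X δ, ?_, ?_⟩⟩⟩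
    · rw [← T.homEquiv_naturality_left, d1]
    · apply pullback.hom_ext
      · simp only [leibnizHom, assoc, pullback.lift_fst]
        rw [← T.homEquiv_naturality_mid, d2, hα]
      · simp only [leibnizHom, assoc, pullback.lift_snd]
        rw [← T.homEquiv_naturality_right, d3, hγ]

theorem hasLiftingProperty_leibnizCotensor_iff (T : THC 𝔸 𝕊 𝔹) [HasPullbacks 𝕊]
    {A B : 𝔸} (f : A ⟶ B) {L K : 𝕊} (u : L ⟶ K) {X Y : 𝔹} (g : X ⟶ Y) :
    HasLiftingProperty u (T.leibnizCotensor f g) ↔ T.LeibnizLifting f u g := by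
  constructor
  · intro h α β γ h1 h2 h3
    have e3 : T.cotensorEquiv A K X β ≫ (T.cotensor.obj (op A)).map g =
        T.cotensorEquiv B K Y γ ≫ (T.cotensor.map f.op).app Y := by
      rw [← T.cotensorEquiv_naturality_right, h3, T.cotensorEquiv_naturality_left]
    have sq : CommSq (T.cotensorEquiv B L X α) u (T.leibnizCotensor f g)
        (pullback.lift (T.cotensorEquiv A K X β) (T.cotensorEquiv B K Y γ) e3) := by
      constructor
      apply pullback.hom_ext
      · simp only [leibnizCotensor, assoc, pullback.lift_fst]
        rw [← T.cotensorEquiv_naturality_left, h1, T.cotensorEquiv_naturality_mid]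
      · simp only [leibnizCotensor, assoc, pullback.lift_snd]
        rw [← T.cotensorEquiv_naturality_right, h2, T.cotensorEquiv_naturality_mid]
    obtain ⟨⟨l, hl, hr⟩⟩ := (h.sq_hasLift sq).exists_lift
    obtain ⟨δ, rfl⟩ := (T.cotensorEquiv B K X).surjective l
    refine ⟨δ, (T.cotensorEquiv A K X).injective ?_, (T.cotensorEquiv B L X).injective ?_,
      (T.cotensorEquiv B K Y).injective ?_⟩
    · have := hr =≫ pullback.fst _ _
      simp only [leibnizCotensor, assoc, pullback.lift_fst] at this
      rw [T.cotensorEquiv_naturality_left, this]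
    · rw [T.cotensorEquiv_naturality_mid, hl]
    · have := hr =≫ pullback.snd _ _
      simp only [leibnizCotensor, assoc, pullback.lift_snd] at this
      rw [T.cotensorEquiv_naturality_right, this]
  · intro h
    refine ⟨fun {t b} sq => ?_⟩
    obtain ⟨α, rfl⟩ := (T.cotensorEquiv B L X).surjective t
    obtain ⟨β, hβ⟩ := (T.cotensorEquiv A K X).surjective (b ≫ pullback.fst _ _)
    obtain ⟨γ, hγ⟩ := (T.cotensorEquiv B K Y).surjective (b ≫ pullback.snd _ _)
    have w1 := sq.w =≫ pullback.fst _ _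
    have w2 := sq.w =≫ pullback.snd _ _
    simp only [leibnizCotensor, assoc, pullback.lift_fst, pullback.lift_snd] at w1 w2
    obtain ⟨δ, d1, d2, d3⟩ := h α β γ
      ((T.cotensorEquiv A L X).injective (by
        rw [T.cotensorEquiv_naturality_left, T.cotensorEquiv_naturality_mid, hβ, w1]))
      ((T.cotensorEquiv B L Y).injective (by
        rw [T.cotensorEquiv_naturality_right, T.cotensorEquiv_naturality_mid, hγ, w2]))
      ((T.cotensorEquiv A K Y).injective (by
        rw [T.cotensorEquiv_naturality_right, T.cotensorEquiv_naturality_left, hβ, hγ, assoc,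
          assoc, pullback.condition]))
    refine ⟨⟨⟨T.cotensorEquiv B K X δ, ?_, ?_⟩⟩⟩
    · rw [← T.cotensorEquiv_naturality_mid, d2]
    · apply pullback.hom_ext
      · simp only [leibnizCotensor, assoc, pullback.lift_fst]
        rw [← T.cotensorEquiv_naturality_left, d1, hβ]
      · simp only [leibnizCotensor, assoc, pullback.lift_snd]
        rw [← T.cotensorEquiv_naturality_right, d3, hγ]

end THC

/-- `f` has the left lifting property with respect to the Leibniz hom
`⟪u,g⟫` if and only if `u` has the left lifting property with respect to the Leibniz
cotensor `⦅f,g⦆`. -/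
theorem thc_llp_hom_iff_cotensor {𝔸 : Type u₁} {𝕊 : Type u₂} {𝔹 : Type u₃}
    [Category.{v₁} 𝔸] [Category.{v₂} 𝕊] [Category.{v₃} 𝔹]
    (T : THC 𝔸 𝕊 𝔹) [HasPushouts 𝔹] [HasPullbacks 𝔸] [HasPullbacks 𝕊]
    {A B : 𝔸} (f : A ⟶ B) {L K : 𝕊} (u : L ⟶ K) {X Y : 𝔹} (g : X ⟶ Y) :
    HasLiftingProperty f (T.leibnizHom u g) ↔
      HasLiftingProperty u (T.leibnizCotensor f g) := by
  rw [T.hasLiftingProperty_leibnizHom_iff, T.hasLiftingProperty_leibnizCotensor_iff]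
end

section
/- Let (⊙, ⟨-,-⟩, ⦅-,-⦆) be a two-variable adjunction on 𝔸, 𝕊, 𝔹, where 𝔹 is cocomplete with pushouts, 𝔸 and 𝕊 have pullbacks, and 𝔸 and 𝕊 are cocomplete. Let (E, M) be a weak factorization system on 𝔹, and let 𝒜, 𝒮 be classes of morphisms in 𝔸 and 𝕊 respectively. If the Leibniz tensor f ⋄ u belongs to E for every f ∈ 𝒜 and u ∈ 𝒮, then f ⋄ u belongs to E for every f in the saturated closure 𝒜ˢ and every u in the saturated closure 𝒮ˢ. -/
/-!
Membership of `f ⋄ u` in `E` means left lifting against every `g ∈ M`. By the two-variable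
adjunction, `f ⋄ u` lifts against `g` exactly when `f` lifts against the Leibniz hom `⟪u, g⟫`, and
exactly when `u` lifts against the Leibniz cotensor `⦅f, g⦆` (`THC.hasLiftingProperty_iff_hom`,
`THC.hasLiftingProperty_iff_cotensor`). Hence, for a fixed class of maps in one variable, the
admissible maps in the other variable form a class defined by a left lifting property. Such a
class is saturated (`isSaturated_llp`), so the hypothesis passes to the saturated closure in one
variable at a time.
-/

open CategoryTheory Category Limits Opposite

universe v₁ v₂ v₃ u₁ u₂ u₃

section Saturation

open CategoryTheory Category Limits

universe w v u

variable {C : Type u} [Category.{v} C]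

/-- `f` is a retract of `g` in the arrow category: there are morphisms `i, r` between the
sources and `j, s` between the targets, commuting with `f` and `g`, with `i ≫ r = 𝟙` and
`j ≫ s = 𝟙`. -/
def IsRetractOfArrow {X Y Z W : C} (f : X ⟶ Y) (g : Z ⟶ W) : Prop :=
  ∃ (i : X ⟶ Z) (r : Z ⟶ X) (j : Y ⟶ W) (s : W ⟶ Y),
    i ≫ r = 𝟙 X ∧ j ≫ s = 𝟙 Y ∧ i ≫ g = f ≫ j ∧ g ≫ s = r ≫ f

/-- The inclusion functor `Set.Iio j ⥤ J`. -/
def iioInclusion {J : Type w} [Preorder J] (j : J) : Set.Iio j ⥤ J :=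
  Monotone.functor (f := fun i => (i : J)) (fun _ _ h => h)

/-- The cocone on the restriction of `F : J ⥤ C` to `Set.Iio j` whose point is `F.obj j`;
asking this cocone to be colimiting expresses that `F` is continuous at `j`. -/
@[simps]
def coconeAt {J : Type w} [Preorder J] (F : J ⥤ C) (j : J) :
    Cocone (iioInclusion j ⋙ F) where
  pt := F.obj j
  ι :=
    { app := fun i => F.map (homOfLE i.2.le)
      naturality := fun i i' h => by
        dsimp [iioInclusion]
        rw [Category.comp_id, ← F.map_comp]
        rfl }

/-- A class of morphisms `W` is closed under transfinite composition if for every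
well-ordered type `J` (with bottom element), every functor `F : J ⥤ C` which is
continuous at every limit element of `J` and sends every successor step into `W`,
and every colimit cocone on `F`, the transfinite composite `F.obj ⊥ ⟶ c.pt` lies
in `W`. -/
def ClosedUnderTransfiniteComposition (W : MorphismProperty C) : Prop :=
  ∀ (J : Type w) (_ : LinearOrder J) (_ : SuccOrder J) (_ : OrderBot J)
    (_ : WellFoundedLT J) (F : J ⥤ C) (c : Cocone F) (_ : IsColimit c),
    (∀ j : J, ¬IsMax j → W (F.map (homOfLE (Order.le_succ j)))) →
    (∀ j : J, Order.IsSuccLimit j → Nonempty (IsColimit (coconeAt F j))) →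
    W (c.ι.app ⊥)

/-- A class of morphisms is saturated if it contains all isomorphisms and is closed
under composition, retracts, pushouts (cobase change) and transfinite composition. -/
structure IsSaturated (W : MorphismProperty C) : Prop where
  of_isIso : ∀ {X Y : C} (f : X ⟶ Y), IsIso f → W f
  comp_mem : ∀ {X Y Z : C} (f : X ⟶ Y) (g : Y ⟶ Z), W f → W g → W (f ≫ g)
  retract_mem : ∀ {X Y Z Z' : C} (f : X ⟶ Y) (g : Z ⟶ Z'),
    IsRetractOfArrow f g → W g → W f
  pushout_mem : ∀ {A A' B B' : C} (f : A ⟶ B) (t : A ⟶ A') (f' : A' ⟶ B') (b : B ⟶ B'),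
    IsPushout t f f' b → W f → W f'
  transfinite : ClosedUnderTransfiniteComposition.{w} W

/-- A class of morphisms is cosaturated if the corresponding class in the opposite
category is saturated, i.e. it contains all isomorphisms and is closed under
composition, retracts, pullbacks (base change) and transfinite op-composition. -/
def IsCosaturated (W : MorphismProperty C) : Prop :=
  IsSaturated.{w} W.op

/-- The saturated closure (saturation) of a class of morphisms: the smallest saturated
class containing it. -/
def saturation (A : MorphismProperty C) : MorphismProperty C :=
  fun _ _ f => ∀ W : MorphismProperty C, IsSaturated.{w} W → A ≤ W → W f

/-- The cosaturated closure (cosaturation) of a class of morphisms: the smallest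
cosaturated class containing it. -/
def cosaturation (A : MorphismProperty C) : MorphismProperty C :=
  fun _ _ f => ∀ W : MorphismProperty C, IsCosaturated.{w} W → A ≤ W → W f

/-- A weak factorization system `(E, M)`: every morphism factors as a morphism of `E`
followed by a morphism of `M`, `E` is precisely the class of morphisms with the left
lifting property against `M`, and `M` is precisely the class of morphisms with the
right lifting property against `E`. -/
structure IsWFS (E M : MorphismProperty C) : Prop where
  factor : ∀ {X Y : C} (f : X ⟶ Y),
    ∃ (Z : C) (e : X ⟶ Z) (m : Z ⟶ Y), E e ∧ M m ∧ e ≫ m = f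
  left_iff : ∀ {X Y : C} (f : X ⟶ Y),
    E f ↔ ∀ {V W : C} (m : V ⟶ W), M m → HasLiftingProperty f m
  right_iff : ∀ {X Y : C} (m : X ⟶ Y),
    M m ↔ ∀ {V W : C} (e : V ⟶ W), E e → HasLiftingProperty e m

end Saturation

open MorphismProperty in
/-- A class defined by a left lifting property is saturated, for transfinite compositions of
any size. -/
lemma isSaturated_llp {C : Type*} [Category* C] (R : MorphismProperty C) :
    IsSaturated.{w} R.llp where
  of_isIso _ _ _ _ _ _ := inferInstance
  comp_mem f g hf hg := R.llp.comp_mem f g hf hg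
  retract_mem f g := by
    rintro ⟨i, r, j, s, hir, hjs, hi, hr⟩ hg
    have ρ : RetractArrow f g :=
      { i := Arrow.homMk i j hi
        r := Arrow.homMk r s hr.symm
        retract := by ext <;> simp [hir, hjs] }
    exact R.llp.of_retract ρ hg
  pushout_mem _ _ _ _ sq hf := R.llp.of_isPushout sq hf
  transfinite J _ _ _ _ F c hc hF hlim := by
    have : F.IsWellOrderContinuous := ⟨fun j hj ↦ hlim j hj⟩
    exact fun _ _ p hp ↦
      HasLiftingProperty.transfiniteComposition.hasLiftingProperty_ι_app_bot
        (hc := hc) (fun j hj ↦ hF j hj _ hp)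

/-- A class of morphisms contained in a left-lifting class has its saturation contained there. -/
lemma saturation_le_llp {C : Type*} [Category* C] {P R : MorphismProperty C} (hPR : P ≤ R.llp) :
    saturation.{w} P ≤ R.llp :=
  fun _ _ _ hf ↦ hf _ (isSaturated_llp R) hPR

namespace THC

variable {𝔸 : Type u₁} {𝕊 : Type u₂} {𝔹 : Type u₃}
  [Category.{v₁} 𝔸] [Category.{v₂} 𝕊] [Category.{v₃} 𝔹] (T : THC 𝔸 𝕊 𝔹)

/-- The adjunctions `a ⊙ - ⊣ ⦅a, -⦆`, parametrized by `a`. -/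
def cotensorAdj : T.tensor ⊣₂ T.cotensor :=
  .mk' (fun a ↦ Adjunction.mkOfHomEquiv
      { homEquiv := T.cotensorEquiv a
        homEquiv_naturality_left_symm := fun {s s' b} w φ ↦ by
          rw [Equiv.symm_apply_eq, T.cotensorEquiv_naturality_mid, Equiv.apply_symm_apply]
        homEquiv_naturality_right := fun φ k ↦ T.cotensorEquiv_naturality_right a _ k φ })
    (fun h s b φ ↦ by
      simpa only [Adjunction.mkOfHomEquiv_homEquiv] using
        T.cotensorEquiv_naturality_left h s b φ)

/-- The adjunctions `- ⊙ s ⊣ ⟨s, -⟩`, parametrized by `s`. -/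
def homAdj : T.tensor.flip ⊣₂ T.hom :=
  .mk' (fun s ↦ Adjunction.mkOfHomEquiv
      { homEquiv := fun a b ↦ T.homEquiv a s b
        homEquiv_naturality_left_symm := fun {a a' b} w φ ↦ by
          rw [Equiv.symm_apply_eq]
          exact ((T.homEquiv_naturality_left w s b _).trans
            (by rw [Equiv.apply_symm_apply])).symm
        homEquiv_naturality_right := fun φ k ↦ T.homEquiv_naturality_right _ s k φ })
    (fun w a b φ ↦ by
      simp only [Adjunction.mkOfHomEquiv_homEquiv]
      exact T.homEquiv_naturality_mid a w b φ)

lemma hasLiftingProperty_iff_cotensor [HasPushouts 𝔹] [HasPullbacks 𝕊]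
    {A B : 𝔸} (f : A ⟶ B) {L K : 𝕊} (u : L ⟶ K) {X Y : 𝔹} (g : X ⟶ Y) :
    HasLiftingProperty (T.leibnizTensor f u) g ↔
      HasLiftingProperty u (T.leibnizCotensor f g) :=
  T.cotensorAdj.hasLiftingProperty_iff
    (.ofHasPushout T.tensor f u) (.ofHasPullback T.cotensor f g)

lemma hasLiftingProperty_iff_hom [HasPushouts 𝔹] [HasPullbacks 𝔸]
    {A B : 𝔸} (f : A ⟶ B) {L K : 𝕊} (u : L ⟶ K) {X Y : 𝔹} (g : X ⟶ Y) :
    HasLiftingProperty (T.leibnizTensor f u) g ↔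
      HasLiftingProperty f (T.leibnizHom u g) :=
  T.homAdj.hasLiftingProperty_iff
    (Functor.PushoutObjObj.ofHasPushout T.tensor f u).flip (.ofHasPullback T.hom u g)

end THC

/-- Let `(E, M)` be a weak factorization system on `𝔹`. If the Leibniz
tensor `f ⋄ u` belongs to `E` for all `f ∈ 𝒜` and `u ∈ 𝒮`, then `f ⋄ u` belongs to `E`
for all `f` in the saturated closure `𝒜ˢ` and all `u` in the saturated closure `𝒮ˢ`. -/
theorem thc_wfs_saturation_tensor {𝔸 : Type u₁} {𝕊 : Type u₂} {𝔹 : Type u₃}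
    [Category.{v₁} 𝔸] [Category.{v₂} 𝕊] [Category.{v₃} 𝔹]
    (T : THC 𝔸 𝕊 𝔹) [HasColimits 𝔹] [HasPushouts 𝔹] [HasPullbacks 𝔸] [HasPullbacks 𝕊]
    [HasColimits 𝔸] [HasColimits 𝕊]
    (E M : MorphismProperty 𝔹) (hwfs : IsWFS E M)
    (𝒜 : MorphismProperty 𝔸) (𝒮 : MorphismProperty 𝕊)
    (h : ∀ {A B : 𝔸} (f : A ⟶ B) {L K : 𝕊} (u : L ⟶ K),
      𝒜 f → 𝒮 u → E (T.leibnizTensor f u)) :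
    ∀ {A B : 𝔸} (f : A ⟶ B) {L K : 𝕊} (u : L ⟶ K),
      saturation.{w₁} 𝒜 f → saturation.{w₂} 𝒮 u → E (T.leibnizTensor f u) := by
  -- Enlarge `𝒜` first: `f` must lift against all `⟪u, g⟫` with `u ∈ 𝒮` and `g ∈ M`.
  have h₁ : ∀ {A B : 𝔸} (f : A ⟶ B) {L K : 𝕊} (u : L ⟶ K),
      saturation.{w₁} 𝒜 f → 𝒮 u → E (T.leibnizTensor f u) := by
    intro A B f L K u hf hu
    refine (hwfs.left_iff _).2 fun {V W} g hg ↦ (T.hasLiftingProperty_iff_hom f u g).2 ?_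
    refine saturation_le_llp (R := .ofHoms fun _ : Unit ↦ T.leibnizHom u g) ?_ f hf _ ⟨()⟩
    rintro A' B' f' hf' _ _ _ ⟨_⟩
    exact (T.hasLiftingProperty_iff_hom f' u g).1 ((hwfs.left_iff _).1 (h f' u hf' hu) g hg)
  intro A B f L K u hf hu
  refine (hwfs.left_iff _).2 fun {V W} g hg ↦ (T.hasLiftingProperty_iff_cotensor f u g).2 ?_
  refine saturation_le_llp (R := .ofHoms fun _ : Unit ↦ T.leibnizCotensor f g) ?_ u hu _ ⟨()⟩
  rintro L' K' u' hu' _ _ _ ⟨_⟩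
  exact (T.hasLiftingProperty_iff_cotensor f u' g).1
    ((hwfs.left_iff _).1 (h₁ f u' hf hu') g hg)
end
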